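/- arXiv:2410.01760 — 2 statements merged into one kernel-verified Lean document; each statement's English description precedes it below -/
import Mathlib

section
/- For any feasible eviction strategy Q (and any run of Q), there exists an eviction graph H_Q of that run together with a coloring of its edges satisfying: (1) any two edges of the same color have the same source vertex; (2) for any two edges (i,j) and (i,j') of the same color, the evictions of pages σ(j) and σ(j') do not overlap; (3) the total number of colors used is at most OPT. Moreover, OBJ_Q ≤ OPT + |E|, where E is the set of edges of H_Q. -/
namespace Caching

attribute [local instance low] Classical.propDecidable

/-- A run of a feasible eviction strategy on the request sequence `σ` with cache size `k`
and time horizon `T`.  `C t` is the cache after processing request `t` (with `C 0 = ∅`),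
and `p t` is the page evicted at time `t` (meaningful at full-cache misses). -/
structure CacheRun (S : Type) [DecidableEq S] (k T : ℕ) (σ : ℕ → S) where
  C : ℕ → Finset S
  p : ℕ → S
  init : C 0 = ∅
  card_le : ∀ t, (C t).card ≤ k
  hit : ∀ t, 1 ≤ t → t ≤ T → (σ t ∈ C (t - 1) ∨ (C (t - 1)).card < k) →
      C t = insert (σ t) (C (t - 1))
  evict_mem : ∀ t, 1 ≤ t → t ≤ T → σ t ∉ C (t - 1) → (C (t - 1)).card = k →
      p t ∈ C (t - 1)
  evict : ∀ t, 1 ≤ t → t ≤ T → σ t ∉ C (t - 1) → (C (t - 1)).card = k →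
      C t = insert (σ t) ((C (t - 1)).erase (p t))

variable {S : Type} [DecidableEq S]

/- `nextReq σ T t` is `ν(t)`: the first time `s > t` (with `s ≤ T`) at which the page
`σ t` is requested again, and `T + 1` if there is no such time. -/
open Classical in
noncomputable def nextReq (σ : ℕ → S) (T t : ℕ) : ℕ :=
  if h : ∃ s, t < s ∧ s ≤ T ∧ σ s = σ t then Nat.find h else T + 1

/-- The total prediction loss `η = Σ_{t=1}^T |ν(t) - ω(t)|`. -/
noncomputable def totalLoss (σ : ℕ → S) (T : ℕ) (ω : ℕ → ℕ) : ℕ :=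
  ∑ t ∈ Finset.Icc 1 T, Nat.dist (nextReq σ T t) (ω t)

/-- `I_Q(t)`: indices of the last requests (up to time `t`) of the currently cached pages. -/
noncomputable def lastIdx {k T : ℕ} {σ : ℕ → S} (R : CacheRun S k T σ) (t : ℕ) : Finset ℕ :=
  (Finset.Icc 1 t).filter fun i => σ i ∈ R.C t ∧ ∀ j ∈ Finset.Icc (i + 1) t, σ j ≠ σ i

/-- Time `t` is a full-cache miss (an eviction step). -/
def EvictStep {k T : ℕ} {σ : ℕ → S} (R : CacheRun S k T σ) (t : ℕ) : Prop :=
  1 ≤ t ∧ t ≤ T ∧ σ t ∉ R.C (t - 1) ∧ (R.C (t - 1)).card = k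

/-- At time `t` the run evicts the page whose last-request index is `i`. -/
def EvictsIdx {k T : ℕ} {σ : ℕ → S} (R : CacheRun S k T σ) (t i : ℕ) : Prop :=
  EvictStep R t ∧ i ∈ lastIdx R (t - 1) ∧ R.p t = σ i

/-- `OBJ_Q`: the number of cache misses of the run. -/
noncomputable def misses {k T : ℕ} {σ : ℕ → S} (R : CacheRun S k T σ) : ℕ :=
  ((Finset.Icc 1 T).filter fun t => σ t ∉ R.C (t - 1)).card

/-- Belady's algorithm: on a full-cache miss always evict the cached page with the
largest next-request time. -/
def IsBelady {k T : ℕ} {σ : ℕ → S} (A : CacheRun S k T σ) : Prop :=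
  ∀ t, EvictStep A t → ∀ i ∈ lastIdx A (t - 1), A.p t = σ i →
    ∀ j ∈ lastIdx A (t - 1), nextReq σ T j ≤ nextReq σ T i

/-- BlindOracle: on a full-cache miss always evict the cached page with the largest
predicted next-request time. -/
def IsBlindOracle {k T : ℕ} {σ : ℕ → S} (B : CacheRun S k T σ) (ω : ℕ → ℕ) : Prop :=
  ∀ t, EvictStep B t → ∀ i ∈ lastIdx B (t - 1), B.p t = σ i →
    ∀ j ∈ lastIdx B (t - 1), ω j ≤ ω i

/-- An eviction graph of a run: a directed graph on `{1,…,T}` whose every edge `(i, j)`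
corresponds to a distinct time (`time e`) at which the run made a mistake by evicting
page `σ j` while `i` was a strictly better eviction candidate in the cache. -/
structure EvictionGraph {k T : ℕ} {σ : ℕ → S} (R : CacheRun S k T σ) where
  E : Finset (ℕ × ℕ)
  time : ℕ × ℕ → ℕ
  time_inj : ∀ e ∈ E, ∀ e' ∈ E, time e = time e' → e = e'
  mistake : ∀ e ∈ E, EvictsIdx R (time e) e.2 ∧ e.1 ∈ lastIdx R (time e - 1) ∧
      nextReq σ T e.2 < nextReq σ T e.1

/-- The eviction at time `t` triggers the eviction at time `t'`: the page evicted
at `t` is next requested at `t' = ν(i)`, which is again an eviction step. -/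
def Triggers {k T : ℕ} {σ : ℕ → S} (R : CacheRun S k T σ) (t t' : ℕ) : Prop :=
  ∃ i, EvictsIdx R t i ∧ t' = nextReq σ T i ∧ ∃ j, EvictsIdx R t' j

/-- The eviction of the page with last-request index `i` triggers the eviction of the
page with last-request index `j` (at time `ν(i)`). -/
def TriggersIdx {k T : ℕ} {σ : ℕ → S} (R : CacheRun S k T σ) (i j : ℕ) : Prop :=
  (∃ t, EvictsIdx R t i) ∧ EvictsIdx R (nextReq σ T i) j

/-- The page requested at time `t` was never requested before. -/
def NewPage (σ : ℕ → S) (t : ℕ) : Prop := ∀ s, 1 ≤ s → s < t → σ s ≠ σ t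

/-- At time `t` the evicted page has the largest prediction among cached pages. -/
def BlindChoiceAt {k T : ℕ} {σ : ℕ → S} (R : CacheRun S k T σ) (ω : ℕ → ℕ) (t : ℕ) : Prop :=
  ∀ i ∈ lastIdx R (t - 1), R.p t = σ i → ∀ j ∈ lastIdx R (t - 1), ω j ≤ ω i

/-- Corrector's choice at time `t`: if some cached page has a provably wrong prediction
(`ω i < t`), evict such a page with minimal prediction; otherwise act as BlindOracle. -/
def CorrectorChoiceAt {k T : ℕ} {σ : ℕ → S} (R : CacheRun S k T σ) (ω : ℕ → ℕ) (t : ℕ) :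
    Prop :=
  ((∃ i ∈ lastIdx R (t - 1), ω i < t) →
    ∀ i ∈ lastIdx R (t - 1), R.p t = σ i →
      ω i < t ∧ ∀ j ∈ lastIdx R (t - 1), ω j < t → ω i ≤ ω j) ∧
  ((¬ ∃ i ∈ lastIdx R (t - 1), ω i < t) → BlindChoiceAt R ω t)

/-- The page requested at time `t` was last evicted (before `t`) at a step labeled with
strategy `s₀` (0 = BlindOracle, 1 = RandomAlg, 2 = Corrector). -/
def LastEvictedWith {k T : ℕ} {σ : ℕ → S} (R : CacheRun S k T σ) (strat : ℕ → Fin 3)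
    (t : ℕ) (s₀ : Fin 3) : Prop :=
  ∃ t₀, t₀ < t ∧ EvictStep R t₀ ∧ R.p t₀ = σ t ∧ strat t₀ = s₀ ∧
    ∀ t₁, t₀ < t₁ → t₁ < t → ¬(EvictStep R t₁ ∧ R.p t₁ = σ t)

/-- A run of the AlternatingOracle strategy (for a fixed realization of its random
choices), together with the labeling `strat` of which of the three strategies was used
at each eviction step: on a miss for a never-requested page use BlindOracle; if the
requested page was last evicted by BlindOracle use RandomAlg (an arbitrary cached page);
if by RandomAlg use Corrector; if by Corrector use BlindOracle. -/
def IsAlternatingOracle {k T : ℕ} {σ : ℕ → S} (R : CacheRun S k T σ) (ω : ℕ → ℕ)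
    (strat : ℕ → Fin 3) : Prop :=
  ∀ t, EvictStep R t →
    (NewPage σ t → strat t = 0 ∧ BlindChoiceAt R ω t) ∧
    (LastEvictedWith R strat t 0 → strat t = 1) ∧
    (LastEvictedWith R strat t 1 → strat t = 2 ∧ CorrectorChoiceAt R ω t) ∧
    (LastEvictedWith R strat t 2 → strat t = 0 ∧ BlindChoiceAt R ω t)

/-- AlternatingOracle driven by a seed `u` of uniform random values: at each eviction
step performed by RandomAlg at time `t`, the evicted page is the one whose last-request
index has rank `u t` among the `k` cached indices, so that for a uniformly random seed
the evicted page is uniform over the cache. -/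
def IsAlternatingOracleSeeded {k T : ℕ} {σ : ℕ → S} (R : CacheRun S k T σ) (ω : ℕ → ℕ)
    (strat : ℕ → Fin 3) (u : Fin (T + 1) → Fin k) : Prop :=
  IsAlternatingOracle R ω strat ∧
  ∀ t (h : EvictStep R t), strat t = 1 →
    ∀ i ∈ lastIdx R (t - 1), R.p t = σ i →
      ((lastIdx R (t - 1)).filter fun j => j < i).card =
        ((u ⟨t, Nat.lt_succ_of_le h.2.1⟩ : Fin k) : ℕ)

/-- The family of runs is adapted to the seeds: the behavior up to time `t` depends only
on the seed values with index at most `t` (the strategy is online). -/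
def Adapted {k T : ℕ} {σ : ℕ → S} (R : (Fin (T + 1) → Fin k) → CacheRun S k T σ)
    (strat : (Fin (T + 1) → Fin k) → ℕ → Fin 3) : Prop :=
  ∀ u u' t, (∀ s : Fin (T + 1), (s : ℕ) ≤ t → u s = u' s) →
    (R u).C t = (R u').C t ∧ (R u).p t = (R u').p t ∧ strat u t = strat u' t

/-- The probability of the outcome `x` for `T` i.i.d. Bernoulli(γ) random bits. -/
noncomputable def bernWeight (γ : ℝ) {T : ℕ} (x : Fin T → Bool) : ℝ :=
  ∏ i, if x i then γ else 1 - γ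

/-- `S(x, m)`: the number of ones among the first `m` coordinates of `x`. -/
noncomputable def scount {T : ℕ} (x : Fin T → Bool) (m : ℕ) : ℕ :=
  (Finset.univ.filter fun i : Fin T => (i : ℕ) < m ∧ x i).card

/-- last request index at most `t` of page `s` (`0` if none) -/
def lastR (σ : ℕ → S) : ℕ → S → ℕ
  | 0, _ => 0
  | t + 1, s => if σ (t + 1) = s then t + 1 else lastR σ t s

/-- next request after time `t` of page `s` -/
noncomputable def nx (σ : ℕ → S) (T t : ℕ) (s : S) : ℕ := nextReq σ T (lastR σ t s)

theorem lastR_le (σ : ℕ → S) (t : ℕ) (s : S) : lastR σ t s ≤ t := by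
  induction t with
  | zero => simp [lastR]
  | succ t ih => simp only [lastR]; split <;> omega

theorem lastR_no (σ : ℕ → S) (t : ℕ) (s : S) :
    ∀ j, lastR σ t s < j → j ≤ t → σ j ≠ s := by
  induction t with
  | zero => intro j h1 h2; omega
  | succ t ih =>
    intro j h1 h2
    simp only [lastR] at h1
    split at h1
    · omega
    · rcases Nat.lt_or_ge j (t + 1) with h | h
      · exact ih j h1 (by omega)
      · have : j = t + 1 := by omega
        subst this; assumption

section runs
variable {k T : ℕ} {σ : ℕ → S}

theorem C_succ_cases (R : CacheRun S k T σ) (t : ℕ) (ht : t + 1 ≤ T) :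
    (σ (t+1) ∈ R.C t ∧ R.C (t+1) = R.C t) ∨
    (σ (t+1) ∉ R.C t ∧ (R.C t).card < k ∧ R.C (t+1) = insert (σ (t+1)) (R.C t)) ∨
    (σ (t+1) ∉ R.C t ∧ (R.C t).card = k ∧ R.p (t+1) ∈ R.C t ∧
      R.C (t+1) = insert (σ (t+1)) ((R.C t).erase (R.p (t+1)))) := by
  have h1 := R.hit (t+1) (by omega) ht
  have h2 := R.evict_mem (t+1) (by omega) ht
  have h3 := R.evict (t+1) (by omega) ht
  have h4 := R.card_le t
  simp only [Nat.add_sub_cancel] at h1 h2 h3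
  by_cases h : σ (t+1) ∈ R.C t
  · left; refine ⟨h, ?_⟩; rw [h1 (Or.inl h)]; exact Finset.insert_eq_of_mem h
  · right
    rcases Nat.lt_or_ge (R.C t).card k with h5 | h5
    · left; exact ⟨h, h5, h1 (Or.inr h5)⟩
    · right; have : (R.C t).card = k := by omega
      exact ⟨h, this, h2 h this, h3 h this⟩

theorem lastR_mem (R : CacheRun S k T σ) (t : ℕ) (ht : t ≤ T) (s : S) (hs : s ∈ R.C t) :
    1 ≤ lastR σ t s ∧ σ (lastR σ t s) = s := by
  induction t with
  | zero => simp [R.init] at hs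
  | succ t ih =>
    simp only [lastR]
    split
    · simp_all
    · have : s ∈ R.C t := by
        have := C_succ_cases R t ht
        grind
      exact ih (by omega) this

theorem lastR_mem_lastIdx (R : CacheRun S k T σ) (t : ℕ) (ht : t ≤ T) (s : S)
    (hs : s ∈ R.C t) : lastR σ t s ∈ lastIdx R t := by
  have h := lastR_mem R t ht s hs
  simp only [lastIdx, Finset.mem_filter, Finset.mem_Icc]
  refine ⟨⟨h.1, lastR_le _ _ _⟩, by rw [h.2]; exact hs, ?_⟩
  intro j hj
  rw [h.2]
  exact lastR_no σ t s j (by omega) hj.2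

theorem nextReq_spec (σ : ℕ → S) (T i : ℕ) :
    (nextReq σ T i = T + 1 ∧ ∀ s, i < s → s ≤ T → σ s ≠ σ i) ∨
    (i < nextReq σ T i ∧ nextReq σ T i ≤ T ∧ σ (nextReq σ T i) = σ i ∧
      ∀ s, i < s → s < nextReq σ T i → σ s ≠ σ i) := by
  unfold nextReq
  split
  · rename_i h
    right
    have := Nat.find_spec h
    refine ⟨this.1, this.2.1, this.2.2, ?_⟩
    intro s h1 h2 h3
    exact Nat.find_min h h2 ⟨h1, by omega, h3⟩
  · left
    refine ⟨rfl, ?_⟩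
    intro s h1 h2 h3
    rename_i h
    exact h ⟨s, h1, h2, h3⟩

theorem nx_gt (R : CacheRun S k T σ) (t : ℕ) (ht : t ≤ T) (s : S) (hs : s ∈ R.C t) :
    t < nx σ T t s := by
  have h := lastR_mem R t ht s hs
  have h2 := lastR_no σ t s
  have h3 := nextReq_spec σ T (lastR σ t s)
  unfold nx
  rcases h3 with h3 | h3
  · omega
  · by_contra hc
    exact h2 _ h3.1 (by omega) (by rw [h3.2.2.1, h.2])

theorem nx_eq (R : CacheRun S k T σ) (t : ℕ) (ht : t + 1 ≤ T) (s : S) (hs : s ∈ R.C t) :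
    nx σ T t s = t + 1 ↔ s = σ (t+1) := by
  have h := lastR_mem R t (by omega) s hs
  have h1 := nx_gt R t (by omega) s hs
  have h2 := lastR_le σ t s
  have h3 := nextReq_spec σ T (lastR σ t s)
  unfold nx at *
  constructor
  · intro h4
    rcases h3 with h3 | h3
    · omega
    · rw [h4] at h3; rw [h3.2.2.1, h.2]
  · intro h4
    rcases h3 with h3 | h3
    · exact absurd (h4.symm.trans h.2.symm) (h3.2 (t+1) (by omega) ht)
    · by_contra h5
      exact h3.2.2.2 (t+1) (by omega) (by omega) (h4.symm.trans h.2.symm)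

theorem nx_succ (σ : ℕ → S) (T t : ℕ) (s : S) (h : s ≠ σ (t+1)) :
    nx σ T (t+1) s = nx σ T t s := by
  unfold nx; simp [lastR, h.symm]

theorem lastR_succ (σ : ℕ → S) (t : ℕ) (s : S) (h : s ≠ σ (t+1)) :
    lastR σ (t+1) s = lastR σ t s := by
  simp [lastR, h.symm]

theorem seen_lemma (R : CacheRun S k T σ) (t : ℕ) (ht : t ≤ T) :
    R.C t ⊆ (Finset.Icc 1 t).image σ ∧
    ((R.C t).card < k → R.C t = (Finset.Icc 1 t).image σ) := by
  induction t with
  | zero => simp [R.init]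
  | succ t ih =>
    have ih := ih (by omega)
    have e : (Finset.Icc 1 (t+1)).image σ = insert (σ (t+1)) ((Finset.Icc 1 t).image σ) := by
      rw [← Finset.image_insert]; congr 1; ext a; simp; omega
    rw [e]
    rcases C_succ_cases R t ht with h | h | h
    · rw [h.2]
      constructor
      · exact ih.1.trans (Finset.subset_insert _ _)
      · intro h2; rw [← ih.2 h2]; exact (Finset.insert_eq_of_mem h.1).symm
    · rw [h.2.2, ← ih.2 h.2.1]; simp
    · rw [h.2.2.2]
      constructor
      · exact Finset.insert_subset_insert _ ((Finset.erase_subset _ _).trans ih.1)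
      · intro h2
        rw [Finset.card_insert_of_notMem (by simp [h.1]), Finset.card_erase_of_mem h.2.2.1] at h2
        have : 0 < (R.C t).card := Finset.card_pos.mpr ⟨_, h.2.2.1⟩
        omega

theorem notfull_eq (R A : CacheRun S k T σ) (t : ℕ) (ht : t ≤ T) (h : (R.C t).card < k) :
    R.C t = A.C t := by
  have h1 := seen_lemma R t ht
  have h2 := seen_lemma A t ht
  have h3 := h1.2 h
  have h4 : A.C t ⊆ R.C t := by rw [h3]; exact h2.1
  rw [h3, h2.2 (lt_of_le_of_lt (Finset.card_le_card h4) h)]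

theorem full_mono (R : CacheRun S k T σ) (t t' : ℕ) (h : t ≤ t') (ht : t' ≤ T)
    (hf : (R.C t).card = k) : (R.C t').card = k := by
  induction t', h using Nat.le_induction with
  | base => exact hf
  | succ u hu ih =>
    have ih := ih (by omega)
    rcases C_succ_cases R u ht with h | h | h
    · rw [h.2]; exact ih
    · omega
    · rw [h.2.2.2, Finset.card_insert_of_notMem (by simp [h.1]), Finset.card_erase_of_mem h.2.2.1]
      have : 0 < (R.C u).card := Finset.card_pos.mpr ⟨_, h.2.2.1⟩
      omega

theorem notmem_mono (R : CacheRun S k T σ) (t t' : ℕ) (h : t ≤ t') (ht : t' ≤ T) (s : S)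
    (hs : s ∉ R.C t) (hn : ∀ u, t < u → u ≤ t' → σ u ≠ s) : s ∉ R.C t' := by
  induction t', h using Nat.le_induction with
  | base => exact hs
  | succ u hu ih =>
    have ih := ih (by omega) (fun v h1 h2 => hn v h1 (by omega))
    have := hn (u+1) (by omega) le_rfl
    have := C_succ_cases R u ht
    grind

/-- target index of the eviction at time `τ` -/
def tgt (R : CacheRun S k T σ) (τ : ℕ) : ℕ := lastR σ (τ - 1) (R.p τ)

theorem evictsIdx_tgt (R : CacheRun S k T σ) (τ : ℕ) (h : EvictStep R τ) :
    EvictsIdx R τ (tgt R τ) := by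
  have hm := R.evict_mem τ h.1 h.2.1 h.2.2.1 h.2.2.2
  have hT := h.2.1
  exact ⟨h, lastR_mem_lastIdx R _ (by omega) _ hm, (lastR_mem R _ (by omega) _ hm).2.symm⟩

theorem evicted_notmem (R : CacheRun S k T σ) (τ : ℕ) (h : EvictStep R τ) :
    R.p τ ∉ R.C τ := by
  have hm := R.evict_mem τ h.1 h.2.1 h.2.2.1 h.2.2.2
  have he := R.evict τ h.1 h.2.1 h.2.2.1 h.2.2.2
  have := h.2.2.1
  grind

theorem tgt_inj_lt (R : CacheRun S k T σ) (τ τ' : ℕ) (h : EvictStep R τ) (h' : EvictStep R τ')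
    (hlt : τ < τ') : tgt R τ ≠ tgt R τ' := by
  intro e
  have a1 := evictsIdx_tgt R τ h
  have a2 := evictsIdx_tgt R τ' h'
  have hp : R.p τ = R.p τ' := by rw [a1.2.2, a2.2.2, e]
  have hm := R.evict_mem τ' h'.1 h'.2.1 h'.2.2.1 h'.2.2.2
  have hT := h'.2.1
  have h1 := h.1
  refine notmem_mono R τ (τ'-1) (by omega) (by omega) (R.p τ) (evicted_notmem R τ h) ?_ (hp ▸ hm)
  intro u hu hu'
  have := lastR_no σ (τ'-1) (R.p τ') u
  have l := lastR_le σ (τ-1) (R.p τ)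
  unfold tgt at e
  rw [hp]
  exact this (by omega) hu'

theorem tgt_inj (R : CacheRun S k T σ) (τ τ' : ℕ) (h : EvictStep R τ) (h' : EvictStep R τ')
    (e : tgt R τ = tgt R τ') : τ = τ' := by
  rcases lt_trichotomy τ τ' with hl | hl | hl
  · exact absurd e (tgt_inj_lt R τ τ' h h' hl)
  · exact hl
  · exact absurd e.symm (tgt_inj_lt R τ' τ h' h hl)

theorem triggers_of (R : CacheRun S k T σ) (τ : ℕ) (h : EvictStep R τ)
    (hT : nextReq σ T (tgt R τ) ≤ T) : Triggers R τ (nextReq σ T (tgt R τ)) := by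
  have a1 := evictsIdx_tgt R τ h
  have hm := R.evict_mem τ h.1 h.2.1 h.2.2.1 h.2.2.2
  have h1 := h.1
  have h2 := h.2.1
  have hgt : τ - 1 < nextReq σ T (tgt R τ) := nx_gt R (τ-1) (by omega) _ hm
  have hs := nextReq_spec σ T (tgt R τ)
  rcases hs with hs | hs
  · omega
  have hp := a1.2.2
  have hne : nextReq σ T (tgt R τ) ≠ τ := by
    intro e
    rw [e] at hs
    have := h.2.2.1
    rw [hs.2.2.1, ← hp] at this
    exact this hm
  have l := lastR_le σ (τ-1) (R.p τ)
  have hev : EvictStep R (nextReq σ T (tgt R τ)) := by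
    refine ⟨by omega, hT, ?_, ?_⟩
    · rw [hs.2.2.1, ← hp]
      refine notmem_mono R τ _ (by omega) (by omega) _ (evicted_notmem R τ h) ?_
      intro u hu hu'
      rw [hp]
      exact hs.2.2.2 u (by unfold tgt; omega) (by omega)
    · exact full_mono R (τ-1) _ (by omega) (by omega) h.2.2.2
  exact ⟨tgt R τ, a1, rfl, _, evictsIdx_tgt R _ hev⟩

/-- misses up to time `t` -/
noncomputable def missUp (R : CacheRun S k T σ) (t : ℕ) : Finset ℕ :=
  (Finset.Icc 1 t).filter fun t => σ t ∉ R.C (t - 1)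

theorem missUp_succ (R : CacheRun S k T σ) (t : ℕ) :
    (missUp R (t+1)).card = (missUp R t).card + if σ (t+1) ∈ R.C t then 0 else 1 := by
  unfold missUp
  have e : Finset.Icc 1 (t+1) = insert (t+1) (Finset.Icc 1 t) := by ext a; simp; omega
  rw [e, Finset.filter_insert]
  split_ifs <;> simp_all

theorem missUp_mono (R : CacheRun S k T σ) (t c : ℕ) (h : c ∈ missUp R t) :
    c ∈ missUp R (t+1) := by
  simp only [missUp, Finset.mem_filter, Finset.mem_Icc] at *
  exact ⟨⟨h.1.1, by omega⟩, h.2⟩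

theorem missUp_le (R : CacheRun S k T σ) (t c : ℕ) (h : c ∈ missUp R t) : c ≤ t := by
  simp only [missUp, Finset.mem_filter, Finset.mem_Icc] at *
  exact h.1.2

theorem missUp_new (R : CacheRun S k T σ) (t : ℕ) (h : σ (t+1) ∉ R.C t) :
    t + 1 ∈ missUp R (t+1) := by
  simp [missUp, h]

/-- The invariant. -/
structure Inv (R A : CacheRun S k T σ) (t : ℕ) (π ρ : S → S) (c : S → ℕ) (B : Finset S)
    (D : Finset ℕ) (src col : ℕ → ℕ) : Prop where
  hπ : ∀ p ∈ R.C t, π p ∈ A.C t ∧ ρ (π p) = p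
  hρ : ∀ a ∈ A.C t, ρ a ∈ R.C t ∧ π (ρ a) = a
  hid : ∀ p ∈ R.C t, p ∈ A.C t → π p = p
  hB : ∀ p ∈ R.C t, nx σ T t (π p) < nx σ T t p → p ∈ B
  pot : (missUp R t).card + B.card ≤ (missUp A t).card + D.card
  hD : ∀ τ ∈ D, τ ≤ t ∧ EvictStep R τ ∧ src τ ∈ lastIdx R (τ - 1) ∧
    nextReq σ T (tgt R τ) < nextReq σ T (src τ) ∧ col τ ∈ missUp A t
  hcol : ∀ τ ∈ D, ∀ τ' ∈ D, τ < τ' → col τ = col τ' →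
    src τ = src τ' ∧ nextReq σ T (tgt R τ) ≤ τ'
  hc : ∀ p ∈ R.C t, p ∉ A.C t → c p ∈ missUp A t ∧ ∀ τ ∈ D, col τ = c p →
    src τ = lastR σ t p ∧
      (nextReq σ T (tgt R τ) ≤ t ∨ nextReq σ T (tgt R τ) ≤ nx σ T t (π p))
  hcinj : ∀ p ∈ R.C t, p ∉ A.C t → ∀ q ∈ R.C t, q ∉ A.C t → c p = c q → p = q

theorem evictStep_succ (R : CacheRun S k T σ) (t : ℕ) (ht : t + 1 ≤ T)
    (h : σ (t+1) ∉ R.C t) (hf : (R.C t).card = k) : EvictStep R (t+1) :=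
  ⟨by omega, ht, by simpa using h, by simpa using hf⟩

theorem tgt_succ (R : CacheRun S k T σ) (t : ℕ) :
    nextReq σ T (tgt R (t+1)) = nx σ T t (R.p (t+1)) := by
  simp [tgt, nx]

section step
variable {R A : CacheRun S k T σ} {t : ℕ} {π ρ : S → S} {c : S → ℕ} {B : Finset S}
    {D : Finset ℕ} {src col : ℕ → ℕ}

theorem hD_same (I : Inv R A t π ρ c B D src col) :
    ∀ τ ∈ D, τ ≤ t + 1 ∧ EvictStep R τ ∧ src τ ∈ lastIdx R (τ - 1) ∧
    nextReq σ T (tgt R τ) < nextReq σ T (src τ) ∧ col τ ∈ missUp A (t + 1) := by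
  intro τ hτ
  obtain ⟨h1, h2, h3, h4, h5⟩ := I.hD τ hτ
  exact ⟨by omega, h2, h3, h4, missUp_mono _ _ _ h5⟩

theorem hD_new (I : Inv R A t π ρ c B D src col) (ht : t + 1 ≤ T) (he : EvictStep R (t+1))
    (b : S) (hb : b ∈ R.C t) (hlt : nx σ T t (R.p (t+1)) < nx σ T t b) (cc : ℕ)
    (hcc : cc ∈ missUp A (t+1)) :
    ∀ τ ∈ insert (t+1) D, τ ≤ t + 1 ∧ EvictStep R τ ∧
      Function.update src (t+1) (lastR σ t b) τ ∈ lastIdx R (τ - 1) ∧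
      nextReq σ T (tgt R τ) < nextReq σ T (Function.update src (t+1) (lastR σ t b) τ) ∧
      Function.update col (t+1) cc τ ∈ missUp A (t + 1) := by
  intro τ hτ
  rcases Finset.mem_insert.mp hτ with h | h
  · subst h
    simp only [Function.update_self]
    refine ⟨le_rfl, he, lastR_mem_lastIdx R t (by omega) b hb, ?_, hcc⟩
    rw [tgt_succ]; exact hlt
  · have := hD_same I τ h
    have h2 := (I.hD τ h).1
    rw [Function.update_of_ne (by omega), Function.update_of_ne (by omega)]
    exact this

theorem hcol_new (I : Inv R A t π ρ c B D src col) (b : S) (cc : ℕ)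
    (hcc : ∀ τ ∈ D, col τ = cc → src τ = lastR σ t b ∧ nextReq σ T (tgt R τ) ≤ t + 1) :
    ∀ τ ∈ insert (t+1) D, ∀ τ' ∈ insert (t+1) D, τ < τ' →
      Function.update col (t+1) cc τ = Function.update col (t+1) cc τ' →
      Function.update src (t+1) (lastR σ t b) τ = Function.update src (t+1) (lastR σ t b) τ' ∧
      nextReq σ T (tgt R τ) ≤ τ' := by
  intro τ hτ τ' hτ' hlt
  have hl := I.hD
  rcases Finset.mem_insert.mp hτ with h | h
  · rcases Finset.mem_insert.mp hτ' with h' | h'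
    · omega
    · have := (hl τ' h').1; omega
  · have h2 := (hl τ h).1
    rcases Finset.mem_insert.mp hτ' with h' | h'
    · subst h'
      have h3 : τ ≠ t + 1 := by omega
      simp only [Function.update_self, Function.update_of_ne h3]
      exact hcc τ h
    · have h3 := (hl τ' h').1
      rw [Function.update_of_ne (by omega), Function.update_of_ne (by omega),
        Function.update_of_ne (by omega), Function.update_of_ne (by omega)]
      exact I.hcol τ h τ' h' hlt

theorem notmem_D (I : Inv R A t π ρ c B D src col) : t + 1 ∉ D := by
  intro h; have := (I.hD _ h).1; omega

theorem col_old (I : Inv R A t π ρ c B D src col) : ∀ τ ∈ D, col τ ≠ t + 1 := by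
  intro τ h e; have := missUp_le _ _ _ (I.hD _ h).2.2.2.2; omega

theorem c_old (I : Inv R A t π ρ c B D src col) :
    ∀ p ∈ R.C t, p ∉ A.C t → c p ≠ t + 1 := by
  intro τ h h' e; have := missUp_le _ _ _ (I.hc _ h h').1; omega

theorem bij_gen {Q A Q' A' : Finset S} {π ρ π' ρ' : S → S} {x y a : S}
    (hπ : ∀ p ∈ Q, π p ∈ A ∧ ρ (π p) = p) (hρ : ∀ a ∈ A, ρ a ∈ Q ∧ π (ρ a) = a)
    (hid : ∀ p ∈ Q, p ∈ A → π p = p) (hy : y ∈ Q) (ha : a ∈ A)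
    (xq : x ∈ Q → x = y) (xa : x ∈ A → x = a)
    (hQ : Q' = insert x (Q.erase y)) (hA : A' = insert x (A.erase a)) (hne : ρ a ≠ y)
    (eπ : π' = Function.update (Function.update π (ρ a) (π y)) x x)
    (eρ : ρ' = Function.update (Function.update ρ (π y) (ρ a)) x x) :
    (∀ p ∈ Q', π' p ∈ A' ∧ ρ' (π' p) = p) ∧ (∀ a ∈ A', ρ' a ∈ Q' ∧ π' (ρ' a) = a) ∧
    (∀ p ∈ Q', p ∈ A' → π' p = p) := by
  subst eπ eρ hQ hA
  refine ⟨?_, ?_, ?_⟩ <;> grind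

theorem bij_del {Q A Q' A' : Finset S} {π ρ π' ρ' : S → S} {x y a : S}
    (hπ : ∀ p ∈ Q, π p ∈ A ∧ ρ (π p) = p) (hρ : ∀ a ∈ A, ρ a ∈ Q ∧ π (ρ a) = a)
    (hid : ∀ p ∈ Q, p ∈ A → π p = p) (hy : y ∈ Q) (ha : a ∈ A)
    (xq : x ∈ Q → x = y) (xa : x ∈ A → x = a)
    (hQ : Q' = insert x (Q.erase y)) (hA : A' = insert x (A.erase a)) (hne : ρ a = y)
    (eπ : π' = Function.update π x x)
    (eρ : ρ' = Function.update ρ x x) :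
    (∀ p ∈ Q', π' p ∈ A' ∧ ρ' (π' p) = p) ∧ (∀ a ∈ A', ρ' a ∈ Q' ∧ π' (ρ' a) = a) ∧
    (∀ p ∈ Q', p ∈ A' → π' p = p) := by
  subst eπ eρ hQ hA
  refine ⟨?_, ?_, ?_⟩ <;> grind

/-- generic step, new pair `(ρ a, π y)` -/
theorem step_gen (I : Inv R A t π ρ c B D src col) {y a : S} (hy : y ∈ R.C t) (ha : a ∈ A.C t)
    (xq : σ (t+1) ∈ R.C t → σ (t+1) = y) (xa : σ (t+1) ∈ A.C t → σ (t+1) = a)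
    (hR : R.C (t+1) = insert (σ (t+1)) ((R.C t).erase y))
    (hA : A.C (t+1) = insert (σ (t+1)) ((A.C t).erase a)) (hne : ρ a ≠ y)
    (cc : ℕ) (hcc : cc ∈ missUp A (t+1))
    (hcp : ∀ p ∈ R.C t, p ∉ A.C t → p ≠ ρ a → c p ≠ cc)
    (B' : Finset S) (hB1 : ∀ p ∈ B, p ≠ y → p ≠ ρ a → p ∈ B')
    (hB2 : nx σ T t (π y) < nx σ T t (ρ a) → ρ a ∈ B')
    (D' : Finset ℕ) (src' col' : ℕ → ℕ)
    (pot' : (missUp R (t+1)).card + B'.card ≤ (missUp A (t+1)).card + D'.card)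
    (hD' : ∀ τ ∈ D', τ ≤ t + 1 ∧ EvictStep R τ ∧ src' τ ∈ lastIdx R (τ - 1) ∧
      nextReq σ T (tgt R τ) < nextReq σ T (src' τ) ∧ col' τ ∈ missUp A (t + 1))
    (hcol' : ∀ τ ∈ D', ∀ τ' ∈ D', τ < τ' → col' τ = col' τ' →
      src' τ = src' τ' ∧ nextReq σ T (tgt R τ) ≤ τ')
    (hb : ∀ τ ∈ D', col' τ = cc → src' τ = lastR σ t (ρ a) ∧
      (nextReq σ T (tgt R τ) ≤ t + 1 ∨ nextReq σ T (tgt R τ) ≤ nx σ T t (π y)))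
    (hold : ∀ τ ∈ D', col' τ ≠ cc → τ ∈ D ∧ col' τ = col τ ∧ src' τ = src τ) :
    ∃ π ρ c B D src col, Inv R A (t+1) π ρ c B D src col := by
  have n1 := nx_succ σ T t
  have n2 := lastR_succ σ t
  have n3 := missUp_mono A t
  obtain ⟨hπ, hρ, hid, hB, pot, hD, hcol, hc, hcinj⟩ := I
  obtain ⟨x, ex⟩ : ∃ x, x = σ (t+1) := ⟨_, rfl⟩
  simp only [← ex] at n1 n2 xq xa hR hA
  obtain ⟨b1, b2, b3⟩ := bij_gen hπ hρ hid hy ha xq xa hR hA hne rfl rfl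
  have hbq := hρ a ha
  have hbx : ρ a ≠ x := by
    intro h; rw [h] at hbq hne; exact hne (xq hbq.1)
  have hzx : π y ≠ x := by
    intro h
    have h1 := hπ y hy
    rw [h] at h1
    apply hne
    rw [← xa h1.1]; exact h1.2
  have hself : ∀ p ∈ R.C (t+1), p ≠ x → p ∈ R.C t ∧ p ≠ y := by
    rw [hR]; intro p hp hpx
    have h := Finset.mem_erase.mp ((Finset.mem_insert.mp hp).resolve_left hpx)
    exact ⟨h.2, h.1⟩
  have hpx : ∀ p ∈ R.C t, p ≠ ρ a → π p ≠ x := by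
    intro p hp hpa h
    have h1 := hπ p hp
    rw [h] at h1
    apply hpa
    rw [← xa h1.1]; exact h1.2.symm
  have hnew : ∀ p ∈ R.C (t+1), p ∉ A.C (t+1) → p ≠ x ∧ (p = ρ a ∨ (p ∈ R.C t ∧ p ∉ A.C t)) := by
    intro p hp hpA
    rw [hA] at hpA
    simp only [Finset.mem_insert, Finset.mem_erase, not_or, not_and, not_not] at hpA
    refine ⟨hpA.1, ?_⟩
    have h1 := hself p hp hpA.1
    by_cases h2 : p ∈ A.C t
    · left
      have h3 : p = a := by
        by_contra h; exact hpA.2 h h2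
      have h4 := hid p h1.1 h2
      have h5 := (hπ p h1.1).2
      rw [h4] at h5
      rw [← h3, h5]
    · exact Or.inr ⟨h1.1, h2⟩
  refine ⟨Function.update (Function.update π (ρ a) (π y)) x x,
    Function.update (Function.update ρ (π y) (ρ a)) x x, Function.update c (ρ a) cc, B', D', src',
    col', b1, b2, b3, ?_, pot', hD', hcol', ?_, ?_⟩
  · intro p hp
    by_cases h1 : p = x
    · rw [h1]; simp
    rw [Function.update_of_ne h1]
    have h2 := hself p hp h1
    by_cases h3 : p = ρ a
    · rw [h3]; simp only [Function.update_self]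
      rw [n1 _ hbx, n1 _ hzx]; exact hB2
    · rw [Function.update_of_ne h3, n1 _ h1, n1 _ (hpx p h2.1 h3)]
      intro h
      exact hB1 p (hB p h2.1 h) h2.2 h3
  · intro p hp hpA
    obtain ⟨h1, h2⟩ := hnew p hp hpA
    rw [Function.update_of_ne h1]
    by_cases h3 : p = ρ a
    · rw [h3]; simp only [Function.update_self]
      rw [n1 _ hzx, n2 _ hbx]; exact ⟨hcc, hb⟩
    · have h4 := h2.resolve_left h3
      have h5 := hc p h4.1 h4.2
      rw [Function.update_of_ne h3, Function.update_of_ne h3, n1 _ (hpx p h4.1 h3), n2 _ h1]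
      refine ⟨n3 _ h5.1, ?_⟩
      intro τ hτ e
      have h6 := hold τ hτ (by rw [e]; exact hcp p h4.1 h4.2 h3)
      have h7 := h5.2 τ h6.1 (by rw [← h6.2.1]; exact e)
      rw [h6.2.2]
      exact ⟨h7.1, h7.2.imp (fun h => by omega) id⟩
  · intro p hp hpA q hq hqA
    obtain ⟨h1, h2⟩ := hnew p hp hpA
    obtain ⟨g1, g2⟩ := hnew q hq hqA
    by_cases h3 : p = ρ a <;> by_cases g3 : q = ρ a
    · intro _; rw [h3, g3]
    · have g4 := g2.resolve_left g3
      rw [Function.update_of_ne g3, h3, Function.update_self]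
      intro e; exact absurd e.symm (hcp q g4.1 g4.2 g3)
    · have h4 := h2.resolve_left h3
      rw [Function.update_of_ne h3, g3, Function.update_self]
      intro e; exact absurd e (hcp p h4.1 h4.2 h3)
    · have h4 := h2.resolve_left h3
      have g4 := g2.resolve_left g3
      rw [Function.update_of_ne h3, Function.update_of_ne g3]
      exact hcinj p h4.1 h4.2 q g4.1 g4.2

/-- generic step where no new pair arises -/
theorem step_del (I : Inv R A t π ρ c B D src col)
    (π' ρ' : S → S)
    (b1 : ∀ p ∈ R.C (t+1), π' p ∈ A.C (t+1) ∧ ρ' (π' p) = p)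
    (b2 : ∀ a ∈ A.C (t+1), ρ' a ∈ R.C (t+1) ∧ π' (ρ' a) = a)
    (b3 : ∀ p ∈ R.C (t+1), p ∈ A.C (t+1) → π' p = p)
    (hsub : ∀ p ∈ R.C (t+1), p ≠ σ (t+1) → p ∈ R.C t ∧ π' p = π p ∧ π p ≠ σ (t+1))
    (hsubA : ∀ p ∈ R.C (t+1), p ∉ A.C (t+1) → p ≠ σ (t+1) ∧ p ∉ A.C t)
    (hx : π' (σ (t+1)) = σ (t+1))
    (B' : Finset S) (hB1 : ∀ p ∈ B, p ∈ R.C (t+1) → p ∈ B')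
    (pot' : (missUp R (t+1)).card + B'.card ≤ (missUp A (t+1)).card + D.card) :
    Inv R A (t+1) π' ρ' c B' D src col := by
  have n1 := nx_succ σ T t
  have n2 := lastR_succ σ t
  have n3 := missUp_mono A t
  refine ⟨b1, b2, b3, ?_, pot', hD_same I, I.hcol, ?_, ?_⟩
  · intro p hp
    by_cases h1 : p = σ (t+1)
    · rw [h1, hx]; simp
    obtain ⟨h2, h3, h4⟩ := hsub p hp h1
    rw [h3, n1 _ h1, n1 _ h4]
    intro h
    exact hB1 p (I.hB p h2 h) hp
  · intro p hp hpA
    obtain ⟨h1, h5⟩ := hsubA p hp hpA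
    obtain ⟨h2, h3, h4⟩ := hsub p hp h1
    have h6 := I.hc p h2 h5
    rw [h3, n1 _ h4, n2 _ h1]
    refine ⟨n3 _ h6.1, fun τ hτ e => ?_⟩
    have h7 := h6.2 τ hτ e
    exact ⟨h7.1, h7.2.imp (fun h => by omega) id⟩
  · intro p hp hpA q hq hqA
    obtain ⟨h1, h5⟩ := hsubA p hp hpA
    obtain ⟨g1, g5⟩ := hsubA q hq hqA
    exact I.hcinj p (hsub p hp h1).1 h5 q (hsub q hq g1).1 g5

/-- pair removed -/
theorem step_del2 (I : Inv R A t π ρ c B D src col) {y a : S} (hy : y ∈ R.C t) (ha : a ∈ A.C t)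
    (xq : σ (t+1) ∈ R.C t → σ (t+1) = y) (xa : σ (t+1) ∈ A.C t → σ (t+1) = a)
    (hR : R.C (t+1) = insert (σ (t+1)) ((R.C t).erase y))
    (hA : A.C (t+1) = insert (σ (t+1)) ((A.C t).erase a)) (hne : ρ a = y)
    (B' : Finset S) (hB1 : ∀ p ∈ B, p ∈ R.C (t+1) → p ∈ B')
    (pot' : (missUp R (t+1)).card + B'.card ≤ (missUp A (t+1)).card + D.card) :
    ∃ π ρ c B D src col, Inv R A (t+1) π ρ c B D src col := by
  obtain ⟨b1, b2, b3⟩ := bij_del I.hπ I.hρ I.hid hy ha xq xa hR hA hne rfl rfl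
  have hπ := I.hπ
  have hρ := I.hρ
  have hid := I.hid
  refine ⟨_, _, _, _, _, _, _, step_del I _ _ b1 b2 b3 ?_ ?_ ?_ B' hB1 pot'⟩
  · clear I b1 b2 b3; grind
  · clear I b1 b2 b3; grind
  · simp

/-- both hit -/
theorem step1 (I : Inv R A t π ρ c B D src col)
    (hx : σ (t+1) ∈ R.C t) (hx' : σ (t+1) ∈ A.C t)
    (hR : R.C (t+1) = R.C t) (hA : A.C (t+1) = A.C t) :
    ∃ π ρ c B D src col, Inv R A (t+1) π ρ c B D src col := by
  have hπ := I.hπ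
  have hρ := I.hρ
  have hid := I.hid
  refine ⟨_, _, _, _, _, _, _, step_del I π ρ ?_ ?_ ?_ ?_ ?_ (hid _ hx hx') B (fun p h _ => h) ?_⟩
  · rw [hR, hA]; exact hπ
  · rw [hR, hA]; exact hρ
  · rw [hR, hA]; exact hid
  · clear I; grind
  · clear I; grind
  · rw [missUp_succ, missUp_succ]; simp [hx, hx', I.pot]

/-- both insert, not full -/
theorem step0 (I : Inv R A t π ρ c B D src col)
    (hx : σ (t+1) ∉ R.C t) (hx' : σ (t+1) ∉ A.C t)
    (hR : R.C (t+1) = insert (σ (t+1)) (R.C t)) (hA : A.C (t+1) = insert (σ (t+1)) (A.C t)) :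
    ∃ π ρ c B D src col, Inv R A (t+1) π ρ c B D src col := by
  have hπ := I.hπ
  have hρ := I.hρ
  have hid := I.hid
  have pot := I.pot
  refine ⟨_, _, _, _, _, _, _, step_del I (Function.update π (σ (t+1)) (σ (t+1)))
    (Function.update ρ (σ (t+1)) (σ (t+1))) ?_ ?_ ?_ ?_ ?_ (by simp) B (fun p h _ => h) ?_⟩
  · clear I pot; grind
  · clear I pot; grind
  · clear I pot; grind
  · clear I pot; grind
  · clear I pot; grind
  · rw [missUp_succ, missUp_succ]; simp [hx, hx']; omega

/-- R hits, A misses -/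
theorem step3 (I : Inv R A t π ρ c B D src col)
    (hx : σ (t+1) ∈ R.C t) (hx' : σ (t+1) ∉ A.C t) (a : S) (ha : a ∈ A.C t)
    (hR : R.C (t+1) = R.C t) (hA : A.C (t+1) = insert (σ (t+1)) ((A.C t).erase a)) :
    ∃ π ρ c B D src col, Inv R A (t+1) π ρ c B D src col := by
  have n4 := missUp_new A t hx'
  have n5 := col_old I
  have n6 := c_old I
  have pot := I.pot
  have hpot : ∀ B' : Finset S, B'.card ≤ B.card + 1 →
      (missUp R (t+1)).card + B'.card ≤ (missUp A (t+1)).card + D.card := by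
    intro B' hB'
    rw [missUp_succ, missUp_succ]; simp [hx, hx']; omega
  have hR' : R.C (t+1) = insert (σ (t+1)) ((R.C t).erase (σ (t+1))) := by
    rw [hR, Finset.insert_erase hx]
  by_cases hbx : ρ a = σ (t+1)
  · exact step_del2 I hx ha (fun _ => rfl) (fun h => absurd h hx') hR' hA hbx B (fun p h _ => h)
      (hpot _ (by omega))
  · exact step_gen I hx ha (fun _ => rfl) (fun h => absurd h hx') hR' hA hbx (t+1) n4
      (fun p h1 h2 _ => n6 p h1 h2) (insert (ρ a) B)
      (fun p h _ _ => Finset.mem_insert_of_mem h) (fun _ => Finset.mem_insert_self _ _) D src col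
      (hpot _ (Finset.card_insert_le _ _)) (hD_same I) I.hcol
      (fun τ h1 h2 => absurd h2 (n5 τ h1)) (fun τ h1 _ => ⟨h1, rfl, rfl⟩)

theorem hold_new (cc s : ℕ) :
    ∀ τ ∈ insert (t+1) D, Function.update col (t+1) cc τ ≠ cc →
      τ ∈ D ∧ Function.update col (t+1) cc τ = col τ ∧ Function.update src (t+1) s τ = src τ := by
  intro τ hτ h
  by_cases e : τ = t + 1
  · rw [e, Function.update_self] at h; exact absurd rfl h
  · rw [Function.update_of_ne e, Function.update_of_ne e]
    exact ⟨(Finset.mem_insert.mp hτ).resolve_left e, rfl, rfl⟩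

theorem hb_new (cc m : ℕ) (b : S)
    (hcc : ∀ τ ∈ D, col τ = cc → src τ = lastR σ t b ∧ nextReq σ T (tgt R τ) ≤ t + 1)
    (hm : nx σ T t (R.p (t+1)) ≤ m) :
    ∀ τ ∈ insert (t+1) D, Function.update col (t+1) cc τ = cc →
      Function.update src (t+1) (lastR σ t b) τ = lastR σ t b ∧
      (nextReq σ T (tgt R τ) ≤ t + 1 ∨ nextReq σ T (tgt R τ) ≤ m) := by
  intro τ hτ h
  by_cases e : τ = t + 1
  · rw [e, Function.update_self, tgt_succ]; exact ⟨rfl, Or.inr hm⟩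
  · rw [Function.update_of_ne e] at h ⊢
    have := hcc τ ((Finset.mem_insert.mp hτ).resolve_left e) h
    exact ⟨this.1, Or.inl this.2⟩

/-- R misses, A hits -/
theorem step2 (I : Inv R A t π ρ c B D src col) (ht : t + 1 ≤ T)
    (hx : σ (t+1) ∉ R.C t) (hx' : σ (t+1) ∈ A.C t) (hf : (R.C t).card = k)
    (hy : R.p (t+1) ∈ R.C t)
    (hR : R.C (t+1) = insert (σ (t+1)) ((R.C t).erase (R.p (t+1)))) (hA : A.C (t+1) = A.C t) :
    ∃ π ρ c B D src col, Inv R A (t+1) π ρ c B D src col := by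
  have n3 := missUp_mono A t
  have n7 := notmem_D I
  have hev := evictStep_succ R t ht hx hf
  have pot := I.pot
  have hA' : A.C (t+1) = insert (σ (t+1)) ((A.C t).erase (σ (t+1))) := by
    rw [hA, Finset.insert_erase hx']
  have hpot : ∀ (B' : Finset S) (D' : Finset ℕ), B'.card + 1 + D.card ≤ B.card + D'.card →
      (missUp R (t+1)).card + B'.card ≤ (missUp A (t+1)).card + D'.card := by
    intro B' D' hB'
    rw [missUp_succ, missUp_succ]; simp [hx, hx']; omega
  have hi := I.hρ _ hx'
  have hiA : ρ (σ (t+1)) ∉ A.C t := by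
    intro h
    have h1 := I.hid _ hi.1 h
    rw [hi.2] at h1
    rw [← h1] at hi
    exact hx hi.1
  have hix : ρ (σ (t+1)) ≠ σ (t+1) := by
    intro h; rw [h] at hiA; exact hiA hx'
  have nxx : nx σ T t (σ (t+1)) = t + 1 := by rw [nx_eq A t ht _ hx']
  have nxi : nx σ T t (σ (t+1)) < nx σ T t (ρ (σ (t+1))) := by
    have h1 := nx_gt R t (by omega) _ hi.1
    have h2 := nx_eq R t ht _ hi.1
    have : nx σ T t (ρ (σ (t+1))) ≠ t + 1 := fun h => hix (h2.mp h)
    omega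
  have hiB : ρ (σ (t+1)) ∈ B := I.hB _ hi.1 (by rw [hi.2]; exact nxi)
  have hciz : ∀ τ ∈ D, col τ = c (ρ (σ (t+1))) →
      src τ = lastR σ t (ρ (σ (t+1))) ∧ nextReq σ T (tgt R τ) ≤ t + 1 := by
    intro τ h1 h2
    have := (I.hc _ hi.1 hiA).2 τ h1 h2
    rw [hi.2, nxx] at this
    exact ⟨this.1, by omega⟩
  have hci := n3 _ (I.hc _ hi.1 hiA).1
  have hcp : ∀ p ∈ R.C t, p ∉ A.C t → p ≠ ρ (σ (t+1)) → c p ≠ c (ρ (σ (t+1))) :=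
    fun p h1 h2 h3 h4 => h3 (I.hcinj p h1 h2 _ hi.1 hiA h4)
  have cB := Finset.card_erase_add_one hiB
  have cD := Finset.card_insert_of_notMem n7
  have xq : σ (t+1) ∈ R.C t → σ (t+1) = R.p (t+1) := fun h => absurd h hx
  have xa : σ (t+1) ∈ A.C t → σ (t+1) = σ (t+1) := fun _ => rfl
  by_cases hyi : ρ (σ (t+1)) = R.p (t+1)
  · refine step_del2 I hy hx' xq xa hR hA' hyi (B.erase (ρ (σ (t+1)))) ?_ (hpot _ _ (by omega))
    intro p h1 h2
    refine Finset.mem_erase.mpr ⟨?_, h1⟩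
    rintro rfl
    rw [hR, hyi] at h2
    rw [hyi] at hix
    simp [hix] at h2
  · have G := step_gen I hy hx' xq xa hR hA' hyi (c (ρ (σ (t+1)))) hci hcp
    have hs : ∀ τ ∈ D, col τ = c (ρ (σ (t+1))) → src τ = lastR σ t (ρ (σ (t+1))) ∧
        (nextReq σ T (tgt R τ) ≤ t + 1 ∨ nextReq σ T (tgt R τ) ≤ nx σ T t (π (R.p (t+1)))) :=
      fun τ h1 h2 => ⟨(hciz τ h1 h2).1, Or.inl (hciz τ h1 h2).2⟩
    by_cases h1 : nx σ T t (π (R.p (t+1))) < nx σ T t (ρ (σ (t+1)))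
    · by_cases h2 : nx σ T t (π (R.p (t+1))) < nx σ T t (R.p (t+1))
      · have hyB : R.p (t+1) ∈ B := I.hB _ hy h2
        have cB' := Finset.card_erase_add_one hyB
        exact G (B.erase (R.p (t+1))) (fun p h1 h2 _ => Finset.mem_erase.mpr ⟨h2, h1⟩)
          (fun _ => Finset.mem_erase.mpr ⟨hyi, hiB⟩) D src col (hpot _ _ (by omega)) (hD_same I)
          I.hcol hs (fun τ h1 _ => ⟨h1, rfl, rfl⟩)
      · exact G B (fun p h1 _ _ => h1) (fun _ => hiB) (insert (t+1) D)
          (Function.update src (t+1) (lastR σ t (ρ (σ (t+1)))))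
          (Function.update col (t+1) (c (ρ (σ (t+1))))) (hpot _ _ (by omega))
          (hD_new I ht hev _ hi.1 (by omega) _ hci) (hcol_new I _ _ hciz)
          (hb_new _ _ _ hciz (by omega)) (hold_new _ _)
    · exact G (B.erase (ρ (σ (t+1)))) (fun p h1 _ h2 => Finset.mem_erase.mpr ⟨h2, h1⟩)
          (fun h => absurd h h1) D src col (hpot _ _ (by omega)) (hD_same I)
          I.hcol hs (fun τ h1 _ => ⟨h1, rfl, rfl⟩)

/-- both miss -/
theorem step4 (I : Inv R A t π ρ c B D src col) (ht : t + 1 ≤ T)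
    (hx : σ (t+1) ∉ R.C t) (hx' : σ (t+1) ∉ A.C t) (hf : (R.C t).card = k)
    (hy : R.p (t+1) ∈ R.C t) (a : S) (ha : a ∈ A.C t)
    (hR : R.C (t+1) = insert (σ (t+1)) ((R.C t).erase (R.p (t+1))))
    (hA : A.C (t+1) = insert (σ (t+1)) ((A.C t).erase a)) :
    ∃ π ρ c B D src col, Inv R A (t+1) π ρ c B D src col := by
  have n4 := missUp_new A t hx'
  have n5 := col_old I
  have n6 := c_old I
  have n7 := notmem_D I
  have hev := evictStep_succ R t ht hx hf
  have pot := I.pot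
  have hciz : ∀ τ ∈ D, col τ = t + 1 →
      src τ = lastR σ t (ρ a) ∧ nextReq σ T (tgt R τ) ≤ t + 1 :=
    fun τ h1 h2 => absurd h2 (n5 τ h1)
  have hpot : ∀ (B' : Finset S) (D' : Finset ℕ), B'.card + D.card ≤ B.card + D'.card →
      (missUp R (t+1)).card + B'.card ≤ (missUp A (t+1)).card + D'.card := by
    intro B' D' hB'
    rw [missUp_succ, missUp_succ]; simp [hx, hx']; omega
  have hb := I.hρ a ha
  have cD := Finset.card_insert_of_notMem n7
  have cb := Finset.card_insert_le (ρ a) B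
  have xq : σ (t+1) ∈ R.C t → σ (t+1) = R.p (t+1) := fun h => absurd h hx
  have xa : σ (t+1) ∈ A.C t → σ (t+1) = a := fun h => absurd h hx'
  by_cases hyi : ρ a = R.p (t+1)
  · exact step_del2 I hy ha xq xa hR hA hyi B (fun p h _ => h) (hpot _ _ (by omega))
  · have G := step_gen I hy ha xq xa hR hA hyi (t+1) n4 (fun p h1 h2 _ => n6 p h1 h2)
    by_cases h1 : nx σ T t (π (R.p (t+1))) < nx σ T t (ρ a) ∧ ¬ nx σ T t a < nx σ T t (ρ a) ∧
        ¬ nx σ T t (π (R.p (t+1))) < nx σ T t (R.p (t+1))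
    · exact G (insert (ρ a) B) (fun p h _ _ => Finset.mem_insert_of_mem h)
          (fun _ => Finset.mem_insert_self _ _) (insert (t+1) D)
          (Function.update src (t+1) (lastR σ t (ρ a)))
          (Function.update col (t+1) (t+1)) (hpot _ _ (by omega))
          (hD_new I ht hev _ hb.1 (by omega) _ n4) (hcol_new I _ _ hciz)
          (hb_new _ _ _ hciz (by omega)) (hold_new _ _)
    · have : ∃ B' : Finset S, B'.card ≤ B.card ∧ (∀ p ∈ B, p ≠ R.p (t+1) → p ∈ B') ∧
          (nx σ T t (π (R.p (t+1))) < nx σ T t (ρ a) → ρ a ∈ B') := by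
        by_cases h2 : nx σ T t (π (R.p (t+1))) < nx σ T t (ρ a)
        · by_cases h3 : nx σ T t a < nx σ T t (ρ a)
          · exact ⟨B, le_rfl, fun p h _ => h, fun _ => I.hB _ hb.1 (by rw [hb.2]; exact h3)⟩
          · have hyB : R.p (t+1) ∈ B := I.hB _ hy (by tauto)
            have cB' := Finset.card_erase_add_one hyB
            have cb := Finset.card_insert_le (ρ a) (B.erase (R.p (t+1)))
            exact ⟨insert (ρ a) (B.erase (R.p (t+1))), by omega,
              fun p h1 h2 => Finset.mem_insert_of_mem (Finset.mem_erase.mpr ⟨h2, h1⟩),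
              fun _ => Finset.mem_insert_self _ _⟩
        · exact ⟨B, le_rfl, fun p h _ => h, fun h => absurd h h2⟩
      obtain ⟨B', hB1, hB2, hB3⟩ := this
      exact G B' (fun p h1 h2 _ => hB2 p h1 h2) hB3 D src col (hpot _ _ (by omega)) (hD_same I)
        I.hcol (fun τ h1 h2 => absurd h2 (n5 τ h1)) (fun τ h1 _ => ⟨h1, rfl, rfl⟩)

end step

theorem inv_exists (R A : CacheRun S k T σ) (t : ℕ) (ht : t ≤ T) :
    ∃ π ρ c B D src col, Inv R A t π ρ c B D src col := by
  induction t with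
  | zero =>
    refine ⟨id, id, fun _ => 0, ∅, ∅, id, id, ?_⟩
    constructor <;> simp [R.init, A.init, missUp]
  | succ t ih =>
    obtain ⟨π, ρ, c, B, D, src, col, I⟩ := ih (by omega)
    have hRA := notfull_eq R A t (by omega)
    have hAR := notfull_eq A R t (by omega)
    rcases C_succ_cases R t ht with ⟨r1, r2⟩ | ⟨r1, r2, r3⟩ | ⟨r1, r2, r3, r4⟩ <;>
    rcases C_succ_cases A t ht with ⟨a1, a2⟩ | ⟨a1, a2, a3⟩ | ⟨a1, a2, a3, a4⟩
    · exact step1 I r1 a1 r2 a2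
    · rw [hAR a2] at a1; contradiction
    · exact step3 I r1 a1 _ a3 r2 a4
    · rw [hRA r2] at r1; contradiction
    · exact step0 I r1 a1 r3 a3
    · rw [hRA r2] at r2; omega
    · exact step2 I ht r1 a1 r2 r3 r4 a2
    · rw [hAR a2] at a2; omega
    · exact step4 I ht r1 a1 r2 r3 _ a3 r4 a4

end runs

/-- For any run of a feasible eviction strategy there is an eviction
graph with an edge coloring such that same-colored edges share their source, the
evictions at same-colored edges do not overlap, at most `OPT` colors are used, and
`OBJ_Q ≤ OPT + |E|`. -/
theorem stmt6 {S : Type} [DecidableEq S] (k T : ℕ) (hk : 1 ≤ k) (σ : ℕ → S)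
    (R A : CacheRun S k T σ) (hA : IsBelady A) :
    ∃ (H : EvictionGraph R) (col : ℕ × ℕ → ℕ) (n : ℕ),
      (∀ e ∈ H.E, col e < n) ∧
      (∀ e ∈ H.E, ∀ e' ∈ H.E, col e = col e' → e.1 = e'.1) ∧
      (∀ e ∈ H.E, ∀ e' ∈ H.E, col e = col e' → H.time e < H.time e' →
        ∃ t', t' ≤ H.time e' ∧ Triggers R (H.time e) t') ∧
      n ≤ misses A ∧
      misses R ≤ misses A + H.E.card := by
  classical
  obtain ⟨π, ρ, c, B, D, src, col, I⟩ := inv_exists R A T le_rfl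
  have hinj : ∀ τ ∈ D, ∀ τ' ∈ D, tgt R τ = tgt R τ' → τ = τ' := fun τ h τ' h' e =>
    tgt_inj R τ τ' (I.hD τ h).2.1 (I.hD τ' h').2.1 e
  let f : ℕ → ℕ × ℕ := fun τ => (src τ, tgt R τ)
  have hfinj : Set.InjOn f D := fun τ h τ' h' e => hinj τ h τ' h' (congrArg Prod.snd e)
  let tm : ℕ × ℕ → ℕ := Function.invFunOn f D
  have htm : ∀ τ ∈ D, tm (f τ) = τ := fun τ h => hfinj.leftInvOn_invFunOn h
  let g : ℕ → ℕ := fun x => if h : x ∈ missUp A T then ((missUp A T).equivFin ⟨x, h⟩ : ℕ) else 0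
  have hg : ∀ x ∈ missUp A T, g x < (missUp A T).card := by
    intro x h; simp only [g, h, dif_pos]; exact Fin.is_lt _
  have hginj : ∀ x ∈ missUp A T, ∀ y ∈ missUp A T, g x = g y → x = y := by
    intro x h y h' e
    simp only [g, h, h', dif_pos] at e
    have := (missUp A T).equivFin.injective (Fin.ext e)
    exact congrArg Subtype.val this
  refine ⟨⟨D.image f, tm, ?_, ?_⟩, fun e => g (col (tm e)), (missUp A T).card, ?_, ?_, ?_,
    le_of_eq rfl, ?_⟩
  · simp only [Finset.mem_image]
    rintro _ ⟨τ, h, rfl⟩ _ ⟨τ', h', rfl⟩ e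
    rw [htm τ h, htm τ' h'] at e
    rw [e]
  · simp only [Finset.mem_image]
    rintro _ ⟨τ, h, rfl⟩
    rw [htm τ h]
    obtain ⟨h1, h2, h3, h4, h5⟩ := I.hD τ h
    exact ⟨evictsIdx_tgt R τ h2, h3, h4⟩
  · simp only [Finset.mem_image]
    rintro _ ⟨τ, h, rfl⟩
    rw [htm τ h]
    exact hg _ (I.hD τ h).2.2.2.2
  · simp only [Finset.mem_image]
    rintro _ ⟨τ, h, rfl⟩ _ ⟨τ', h', rfl⟩ e
    rw [htm τ h, htm τ' h'] at e
    have e := hginj _ (I.hD τ h).2.2.2.2 _ (I.hD τ' h').2.2.2.2 e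
    rcases lt_trichotomy τ τ' with hl | hl | hl
    · exact (I.hcol τ h τ' h' hl e).1
    · rw [hl]
    · exact (I.hcol τ' h' τ h hl e.symm).1.symm
  · simp only [Finset.mem_image]
    rintro _ ⟨τ, h, rfl⟩ _ ⟨τ', h', rfl⟩ e hl
    rw [htm τ h, htm τ' h'] at e hl
    rw [htm τ h, htm τ' h']
    have e := hginj _ (I.hD τ h).2.2.2.2 _ (I.hD τ' h').2.2.2.2 e
    have h2 := (I.hcol τ h τ' h' hl e).2
    have h3 := (I.hD τ' h').1
    exact ⟨_, h2, triggers_of R τ (I.hD τ h).2.1 (by omega)⟩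
  · have h1 := I.pot
    have h2 : (D.image f).card = D.card := Finset.card_image_of_injOn hfinj
    change (missUp R T).card ≤ (missUp A T).card + (D.image f).card
    omega

end Caching
end

section
/- For any feasible eviction strategy Q (and any run of Q), there exists an eviction graph H_Q of that run together with a coloring of its edges satisfying: (1) any two edges of the same color have the same source vertex; (2) all edges of any single color can be ordered as (i, j₁),…,(i, j_d) so that (j₁,…,j_d) forms a chain; (3) the total number of colors used is at most 3·OPT. Moreover, OBJ_Q ≤ 2·OPT + |E|, where E is the set of edges of H_Q. -/
namespace Caching

attribute [local instance low] Classical.propDecidable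

variable {S : Type} [DecidableEq S]

section Aux

variable {k T : ℕ} {σ : ℕ → S}

lemma mem_lastIdx (R : CacheRun S k T σ) (t i : ℕ) : i ∈ lastIdx R t ↔
    1 ≤ i ∧ i ≤ t ∧ σ i ∈ R.C t ∧ ∀ j, i < j → j ≤ t → σ j ≠ σ i := by
  unfold lastIdx
  simp only [Finset.mem_filter, Finset.mem_Icc]
  constructor
  · rintro ⟨⟨a, b⟩, c, d⟩
    exact ⟨a, b, c, fun j h1 h2 => d j ⟨h1, h2⟩⟩
  · rintro ⟨a, b, c, d⟩
    exact ⟨⟨a, b⟩, c, fun j h => d j h.1 h.2⟩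

lemma lastIdx_unique (R A : CacheRun S k T σ) {t i j : ℕ} (hi : i ∈ lastIdx R t)
    (hj : j ∈ lastIdx A t) (h : σ i = σ j) : i = j := by
  rw [mem_lastIdx] at hi hj
  rcases lt_trichotomy i j with h1 | h1 | h1
  · exact absurd h.symm (hi.2.2.2 j h1 hj.2.1)
  · exact h1
  · exact absurd h (hj.2.2.2 i h1 hi.2.1)

lemma C_succ_sub (R : CacheRun S k T σ) {t : ℕ} (ht : t < T) {y : S}
    (hy : y ∈ R.C (t + 1)) : y = σ (t + 1) ∨ y ∈ R.C t := by
  by_cases h : σ (t + 1) ∈ R.C t ∨ (R.C t).card < k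
  · rw [R.hit (t + 1) (by omega) (by omega) (by simpa using h)] at hy
    simpa using hy
  · push Not at h
    have hc : (R.C t).card = k := le_antisymm (R.card_le t) h.2
    rw [R.evict (t + 1) (by omega) (by omega) (by simpa using h.1) (by simpa using hc)] at hy
    simp at hy
    tauto

lemma requested (R : CacheRun S k T σ) {t : ℕ} (ht : t ≤ T) {y : S} (hy : y ∈ R.C t) :
    ∃ i, i ∈ lastIdx R t ∧ σ i = y := by
  have key : ∃ i, 1 ≤ i ∧ i ≤ t ∧ σ i = y ∧ ∀ j, i < j → j ≤ t → σ j ≠ y := by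
    induction t with
    | zero => rw [R.init] at hy; simp at hy
    | succ t ih =>
      by_cases h : y = σ (t + 1)
      · exact ⟨t + 1, by omega, le_rfl, h.symm, fun j h1 h2 => by omega⟩
      · rcases C_succ_sub R (by omega) hy with h' | h'
        · exact absurd h' h
        · obtain ⟨i, h1, h2, h3, h4⟩ := ih (by omega) h'
          refine ⟨i, h1, by omega, h3, fun j h5 h6 => ?_⟩
          rcases Nat.lt_or_ge j (t + 1) with h7 | h7
          · exact h4 j h5 (by omega)
          · have : j = t + 1 := by omega
            subst this
            exact fun h8 => h h8.symm
  obtain ⟨i, h1, h2, h3, h4⟩ := key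
  exact ⟨i, (mem_lastIdx R t i).2 ⟨h1, h2, h3 ▸ hy, fun j a b => h3 ▸ h4 j a b⟩, h3⟩

lemma nextReq_gt (σ : ℕ → S) {T i t : ℕ} (ht : t ≤ T)
    (h : ∀ j, i < j → j ≤ t → σ j ≠ σ i) : t < nextReq σ T i := by
  unfold nextReq
  split_ifs with hh
  · have := Nat.find_spec hh
    by_contra hc
    exact h _ this.1 (by omega) this.2.2
  · omega

lemma nextReq_eq (σ : ℕ → S) {T i t : ℕ} (ht : t < T) (hi : i ≤ t)
    (h : ∀ j, i < j → j ≤ t → σ j ≠ σ i) : nextReq σ T i = t + 1 ↔ σ (t + 1) = σ i := by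
  constructor
  · intro h1
    unfold nextReq at h1
    split_ifs at h1 with hh
    · have := Nat.find_spec hh
      rw [h1] at this
      exact this.2.2
    · omega
  · intro h1
    have h2 := nextReq_gt σ ht.le h
    have hh : ∃ s, i < s ∧ s ≤ T ∧ σ s = σ i := ⟨t + 1, by omega, by omega, h1⟩
    have h3 : nextReq σ T i ≤ t + 1 := by
      unfold nextReq
      rw [dif_pos hh]
      exact Nat.find_min' hh ⟨by omega, by omega, h1⟩
    omega

lemma idx_step (R : CacheRun S k T σ) {t e : ℕ} (he : e ∈ lastIdx R t)
    (hC : ∀ y, y ∈ R.C (t + 1) ↔ y = σ (t + 1) ∨ (y ∈ R.C t ∧ y ≠ σ e))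
    (hh : σ (t + 1) ∈ R.C t → σ e = σ (t + 1)) :
    lastIdx R (t + 1) = insert (t + 1) ((lastIdx R t).erase e) := by
  ext i
  simp only [Finset.mem_insert, Finset.mem_erase]
  constructor
  · intro hi
    rw [mem_lastIdx] at hi
    obtain ⟨h1, h2, h3, h4⟩ := hi
    by_cases hit : i = t + 1
    · exact Or.inl hit
    · right
      have h5 := h4 (t + 1) (by omega) le_rfl
      rcases (hC _).1 h3 with h6 | h6
      · exact absurd h6.symm h5
      · refine ⟨fun h => h6.2 (by rw [h]), (mem_lastIdx R t i).2 ⟨h1, by omega, h6.1, ?_⟩⟩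
        exact fun j a b => h4 j a (by omega)
  · rintro (h | ⟨h1, h2⟩)
    · subst h
      exact (mem_lastIdx R _ _).2 ⟨by omega, le_rfl, (hC _).2 (Or.inl rfl),
        fun j a b => by omega⟩
    · have h3 : σ i ≠ σ e := fun h => h1 (lastIdx_unique R R h2 he h)
      have h2' := (mem_lastIdx R t i).1 h2
      have h4 : σ (t + 1) ≠ σ i := by
        intro h
        exact h3 (by rw [hh (h ▸ h2'.2.2.1), h])
      refine (mem_lastIdx R _ _).2 ⟨h2'.1, by omega, (hC _).2 (Or.inr ⟨h2'.2.2.1, h3⟩), ?_⟩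
      intro j a b
      rcases Nat.lt_or_ge j (t + 1) with h7 | h7
      · exact h2'.2.2.2 j a (by omega)
      · have : j = t + 1 := by omega
        subst this
        exact h4

/-- One full (or hit) step in terms of last-request indices. -/
lemma full_step (R : CacheRun S k T σ) {t : ℕ} (ht : t < T)
    (h : σ (t + 1) ∈ R.C t ∨ (R.C t).card = k) :
    ∃ e ∈ lastIdx R t, lastIdx R (t + 1) = insert (t + 1) ((lastIdx R t).erase e) ∧
      (σ (t + 1) ∈ R.C t → nextReq σ T e = t + 1) ∧
      (σ (t + 1) ∉ R.C t → EvictsIdx R (t + 1) e) := by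
  by_cases hm : σ (t + 1) ∈ R.C t
  · obtain ⟨e, he, hs⟩ := requested R ht.le hm
    have he' := (mem_lastIdx R t e).1 he
    refine ⟨e, he, idx_step R he ?_ (fun _ => hs), fun _ => ?_, fun h => absurd hm h⟩
    · intro y
      rw [R.hit (t + 1) (by omega) (by omega) (by simpa using Or.inl hm), hs]
      simp only [Nat.add_sub_cancel, Finset.mem_insert]
      tauto
    · exact (nextReq_eq σ ht he'.2.1 he'.2.2.2).2 hs.symm
  · have hc : (R.C t).card = k := by tauto
    have hp := R.evict_mem (t + 1) (by omega) (by omega) (by simpa using hm) (by simpa using hc)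
    simp only [Nat.add_sub_cancel] at hp
    obtain ⟨e, he, hs⟩ := requested R ht.le hp
    refine ⟨e, he, idx_step R he ?_ (fun h => absurd h hm), fun h => absurd h hm, fun _ => ?_⟩
    · intro y
      rw [R.evict (t + 1) (by omega) (by omega) (by simpa using hm) (by simpa using hc), hs]
      simp only [Nat.add_sub_cancel, Finset.mem_insert, Finset.mem_erase]
      tauto
    · exact ⟨⟨by omega, by omega, by simpa using hm, by simpa using hc⟩, by simpa using he,
        hs.symm⟩

lemma evicts_time_unique (R : CacheRun S k T σ) {s t j : ℕ} (h1 : EvictsIdx R s j)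
    (h2 : EvictsIdx R t j) : s = t := by
  have main : ∀ s t, s < t → EvictsIdx R s j → EvictsIdx R t j → False := by
    intro s t hst ⟨⟨a1, a2, a3, a4⟩, b, c⟩ ⟨⟨d1, d2, d3, d4⟩, e, f⟩
    rw [mem_lastIdx] at b e
    have hj : j < s := by omega
    have : ∀ r, s ≤ r → r ≤ t - 1 → σ j ∉ R.C r := by
      intro r hr
      induction r, hr using Nat.le_induction with
      | base =>
        intro _
        rw [R.evict s a1 a2 a3 a4, c]
        simp only [Finset.mem_insert, Finset.mem_erase]
        intro h
        rcases h with h | h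
        · exact a3 (h ▸ b.2.2.1)
        · exact h.1 rfl
      | succ r hr ih =>
        intro hrt hm
        rcases C_succ_sub R (by omega) hm with h | h
        · exact e.2.2.2 (r + 1) (by omega) hrt h.symm
        · exact ih (by omega) h
    exact this (t - 1) (by omega) le_rfl e.2.2.1
  rcases lt_trichotomy s t with h | h | h
  · exact (main s t h h1 h2).elim
  · exact h
  · exact (main t s h h2 h1).elim

lemma evicts_idx_unique (R : CacheRun S k T σ) {t i j : ℕ} (h1 : EvictsIdx R t i)
    (h2 : EvictsIdx R t j) : i = j :=
  lastIdx_unique R R h1.2.1 h2.2.1 (h1.2.2.symm.trans h2.2.2)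

/-- Either the two caches agree or both are full. -/
lemma caches_full (R A : CacheRun S k T σ) {t : ℕ} (ht : t ≤ T) :
    R.C t = A.C t ∨ ((R.C t).card = k ∧ (A.C t).card = k) := by
  have hfull : ∀ (Q : CacheRun S k T σ) (t : ℕ), t < T → (Q.C t).card = k →
      (Q.C (t + 1)).card = k := by
    intro Q t ht hc
    by_cases h : σ (t + 1) ∈ Q.C t
    · rw [Q.hit (t + 1) (by omega) (by omega) (by simpa using Or.inl h)]
      simpa [Finset.insert_eq_of_mem h] using hc
    · have hp := Q.evict_mem (t + 1) (by omega) (by omega) (by simpa using h) (by simpa using hc)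
      rw [Q.evict (t + 1) (by omega) (by omega) (by simpa using h) (by simpa using hc)]
      simp only [Nat.add_sub_cancel] at hp ⊢
      rw [Finset.card_insert_of_notMem (by simp [h]), Finset.card_erase_of_mem hp, hc]
      have : 0 < (Q.C t).card := Finset.card_pos.2 ⟨_, hp⟩
      omega
  induction t with
  | zero => left; rw [R.init, A.init]
  | succ t ih =>
    rcases ih (by omega) with h | h
    · by_cases hc : (R.C t).card = k
      · right
        exact ⟨hfull R t (by omega) hc, hfull A t (by omega) (h ▸ hc)⟩
      · left
        have h1 : (R.C t).card < k := lt_of_le_of_ne (R.card_le t) hc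
        rw [R.hit (t + 1) (by omega) (by omega) (by simpa using Or.inr h1),
          A.hit (t + 1) (by omega) (by omega) (by simpa [← h] using Or.inr h1)]
        simp [h]
    · right
      exact ⟨hfull R t (by omega) h.1, hfull A t (by omega) h.2⟩

lemma lastIdx_congr (R A : CacheRun S k T σ) {t : ℕ} (h : R.C t = A.C t) :
    lastIdx R t = lastIdx A t := by
  unfold lastIdx
  rw [h]

/-- Number of misses up to time `t`. -/
noncomputable def missTo (R : CacheRun S k T σ) (t : ℕ) : ℕ :=
  ((Finset.Icc 1 t).filter fun t => σ t ∉ R.C (t - 1)).card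

lemma missTo_succ_hit (R : CacheRun S k T σ) {t : ℕ} (h : σ (t + 1) ∈ R.C t) :
    missTo R (t + 1) = missTo R t := by
  unfold missTo
  rw [← Finset.insert_Icc_right_eq_Icc_add_one (by omega), Finset.filter_insert]
  simp [h]

lemma missTo_succ_miss (R : CacheRun S k T σ) {t : ℕ} (h : σ (t + 1) ∉ R.C t) :
    missTo R (t + 1) = missTo R t + 1 := by
  unfold missTo
  rw [← Finset.insert_Icc_right_eq_Icc_add_one (by omega), Finset.filter_insert]
  simp [h]

end Aux

section Graph

variable {k T : ℕ} {σ : ℕ → S}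

/-- The partially built colored graph: color `c < n` has source `src c` and list of targets
`L c` (most recent first). -/
structure GInv (R : CacheRun S k T σ) (t n : ℕ) (src : ℕ → ℕ) (L : ℕ → List ℕ) : Prop where
  mist : ∀ c, ∀ j ∈ L c, c < n ∧ ∃ s ≤ t, EvictsIdx R s j ∧ src c ∈ lastIdx R (s - 1) ∧
    nextReq σ T j < nextReq σ T (src c)
  chain : ∀ c, (L c).IsChain (fun a b => TriggersIdx R b a)
  nodup : ∀ c, (L c).Nodup
  disj : ∀ c c' j, j ∈ L c → j ∈ L c' → c = c'

/-- Number of edges. -/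
def ecount (n : ℕ) (L : ℕ → List ℕ) : ℕ := ∑ c ∈ Finset.range n, (L c).length

lemma GInv.mono {R : CacheRun S k T σ} {t t' n : ℕ} {src : ℕ → ℕ} {L : ℕ → List ℕ}
    (h : GInv R t n src L) (ht : t ≤ t') : GInv R t' n src L := by
  refine ⟨fun c j hj => ?_, h.chain, h.nodup, h.disj⟩
  obtain ⟨h1, s, h2, h3⟩ := h.mist c j hj
  exact ⟨h1, s, by omega, h3⟩

lemma GInv.nil {R : CacheRun S k T σ} {t n : ℕ} {src : ℕ → ℕ} {L : ℕ → List ℕ}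
    (h : GInv R t n src L) : L n = [] := by
  rw [List.eq_nil_iff_forall_not_mem]
  intro j hj
  exact lt_irrefl _ (h.mist n j hj).1

lemma GInv.fresh {R : CacheRun S k T σ} {t n : ℕ} {src : ℕ → ℕ} {L : ℕ → List ℕ}
    (h : GInv R t n src L) {j : ℕ} (hj : EvictsIdx R (t + 1) j) (c : ℕ) : j ∉ L c := by
  intro hc
  obtain ⟨_, s, h2, h3, _⟩ := h.mist c j hc
  have := evicts_time_unique R h3 hj
  omega

lemma GInv.newColor {R : CacheRun S k T σ} {t n : ℕ} {src : ℕ → ℕ} {L : ℕ → List ℕ}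
    (h : GInv R t n src L) (a : ℕ) : GInv R t (n + 1) (Function.update src n a) L := by
  refine ⟨fun c j hj => ?_, h.chain, h.nodup, h.disj⟩
  obtain ⟨h1, s, h2⟩ := h.mist c j hj
  rw [Function.update_of_ne (by omega)]
  exact ⟨by omega, s, h2⟩

lemma ecount_newColor {R : CacheRun S k T σ} {t n : ℕ} {src : ℕ → ℕ} {L : ℕ → List ℕ}
    (h : GInv R t n src L) : ecount (n + 1) L = ecount n L := by
  unfold ecount
  rw [Finset.sum_range_succ, h.nil]
  simp

lemma GInv.extend {R : CacheRun S k T σ} {t n : ℕ} {src : ℕ → ℕ} {L : ℕ → List ℕ}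
    (h : GInv R t n src L) {c j : ℕ} (hc : c < n) (hj : EvictsIdx R (t + 1) j)
    (hs : src c ∈ lastIdx R t) (hlt : nextReq σ T j < nextReq σ T (src c))
    (hl : L c = [] ∨ ∃ u, (L c).head? = some u ∧ nextReq σ T u = t + 1) :
    GInv R (t + 1) n src (Function.update L c (j :: L c)) := by
  have hmem : ∀ c' j', j' ∈ Function.update L c (j :: L c) c' →
      (c' = c ∧ j' = j) ∨ j' ∈ L c' := by
    intro c' j' hm
    by_cases e : c' = c
    · subst e; simp at hm; tauto
    · rw [Function.update_of_ne e] at hm; exact Or.inr hm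
  refine ⟨fun c' j' hm => ?_, fun c' => ?_, fun c' => ?_, fun c₁ c₂ j' h1 h2 => ?_⟩
  · rcases hmem c' j' hm with ⟨rfl, rfl⟩ | hm
    · exact ⟨hc, t + 1, le_rfl, hj, by simpa using hs, hlt⟩
    · exact (h.mono (Nat.le_succ t)).mist c' j' hm
  · by_cases e : c' = c
    · subst e
      rw [Function.update_self]
      rcases hl with hl | ⟨u, hu, hn⟩
      · rw [hl]; simp
      · match hL : L c', hu with
        | u' :: l, hu =>
          simp at hu
          subst hu
          rw [List.isChain_cons_cons]
          refine ⟨⟨?_, ?_⟩, hL ▸ h.chain c'⟩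
          · obtain ⟨_, s, _, h3, _⟩ := h.mist c' u' (by rw [hL]; simp)
            exact ⟨s, h3⟩
          · rw [hn]; exact hj
    · rw [Function.update_of_ne e]; exact h.chain c'
  · by_cases e : c' = c
    · subst e
      rw [Function.update_self, List.nodup_cons]
      exact ⟨h.fresh hj c', h.nodup c'⟩
    · rw [Function.update_of_ne e]; exact h.nodup c'
  · have hf := fun c => h.fresh hj c
    rcases hmem c₁ j' h1 with ⟨rfl, rfl⟩ | h1
    · rcases hmem c₂ _ h2 with ⟨rfl, _⟩ | h2
      · rfl
      · exact absurd h2 (hf _)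
    · rcases hmem c₂ _ h2 with ⟨e1, e2⟩ | h2
      · exact absurd (e2 ▸ h1) (hf _)
      · exact h.disj _ _ _ h1 h2

lemma ecount_extend {n : ℕ} {L : ℕ → List ℕ} {c j : ℕ} (hc : c < n) :
    ecount n (Function.update L c (j :: L c)) = ecount n L + 1 := by
  unfold ecount
  have hm : c ∈ Finset.range n := Finset.mem_range.2 hc
  rw [← Finset.add_sum_erase _ _ hm, ← Finset.add_sum_erase _ (fun c => (L c).length) hm]
  have : ∑ x ∈ (Finset.range n).erase c, (Function.update L c (j :: L c) x).length =
      ∑ x ∈ (Finset.range n).erase c, (L x).length := by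
    refine Finset.sum_congr rfl fun x hx => ?_
    rw [Function.update_of_ne (Finset.ne_of_mem_erase hx)]
  rw [this]
  simp
  omega

/-- From the colored lists to the eviction graph. -/
lemma GInv.finish {R : CacheRun S k T σ} {t n : ℕ} {src : ℕ → ℕ} {L : ℕ → List ℕ}
    (h : GInv R t n src L) :
    ∃ (H : EvictionGraph R) (col : ℕ × ℕ → ℕ),
      (∀ e ∈ H.E, col e < n) ∧
      (∀ e ∈ H.E, ∀ e' ∈ H.E, col e = col e' → e.1 = e'.1) ∧
      (∀ c : ℕ, ∃ (d : ℕ) (a : ℕ) (b : ℕ → ℕ),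
        (H.E.filter fun e => col e = c) = (Finset.range d).image (fun x => (a, b x)) ∧
        (∀ x < d, ∀ x' < d, b x = b x' → x = x') ∧
        (∀ x, x + 1 < d → TriggersIdx R (b x) (b (x + 1)))) ∧
      H.E.card = ecount n L := by
  classical
  have hex : ∀ e : ℕ × ℕ, ∃ c s, (∃ c, e.2 ∈ L c) → e.2 ∈ L c ∧ EvictsIdx R s e.2 ∧
      src c ∈ lastIdx R (s - 1) ∧ nextReq σ T e.2 < nextReq σ T (src c) := by
    intro e
    by_cases hc : ∃ c, e.2 ∈ L c
    · obtain ⟨c, hc⟩ := hc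
      obtain ⟨_, s, _, h3⟩ := h.mist c _ hc
      exact ⟨c, s, fun _ => ⟨hc, h3⟩⟩
    · exact ⟨0, 0, fun h => absurd h hc⟩
  choose col tm hct using hex
  let E : Finset (ℕ × ℕ) := (Finset.range n).biUnion
    (fun c => (L c).toFinset.image (fun j => (src c, j)))
  have hE : ∀ e, e ∈ E ↔ ∃ c, e.2 ∈ L c ∧ e.1 = src c := by
    intro e
    simp only [E, Finset.mem_biUnion, Finset.mem_range, Finset.mem_image, List.mem_toFinset]
    constructor
    · rintro ⟨c, _, j, hj, rfl⟩
      exact ⟨c, hj, rfl⟩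
    · rintro ⟨c, hj, hs⟩
      exact ⟨c, (h.mist c _ hj).1, e.2, hj, by rw [← hs]⟩
  have hcol : ∀ e ∈ E, e.2 ∈ L (col e) ∧ e.1 = src (col e) := by
    intro e he
    obtain ⟨c, hc, hs⟩ := (hE e).1 he
    have h1 := (hct e ⟨c, hc⟩).1
    have := h.disj _ _ _ hc h1
    exact ⟨h1, this ▸ hs⟩
  have hE2 : ∀ e ∈ E, ∃ c, e.2 ∈ L c := fun e he => ⟨_, (hcol e he).1⟩
  have htgt : ∀ e ∈ E, ∀ e' ∈ E, e.2 = e'.2 → e = e' := by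
    intro e he e' he' h2
    have h3 := hcol e he
    have h4 := hcol e' he'
    have h5 := h.disj _ _ _ h3.1 (h2 ▸ h4.1)
    exact Prod.ext (by rw [h3.2, h4.2, h5]) h2
  refine ⟨⟨E, tm, ?_, ?_⟩, col, ?_, ?_, ?_, ?_⟩
  · intro e he e' he' ht
    have h1 := (hct e (hE2 e he)).2.1
    have h2 := (hct e' (hE2 e' he')).2.1
    rw [← ht] at h2
    exact htgt e he e' he' (evicts_idx_unique R h1 h2)
  · intro e he
    have h1 := (hct e (hE2 e he)).2
    rw [(hcol e he).2]
    exact h1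
  · intro e he
    exact (h.mist _ _ (hcol e he).1).1
  · intro e he e' he' hc
    rw [(hcol e he).2, (hcol e' he').2, hc]
  · intro c
    have hget : ∀ x, (hx : x < (L c).length) →
        (L c).reverse.getD x 0 = (L c)[(L c).length - 1 - x]'(by omega) := by
      intro x hx
      rw [List.getD_eq_getElem _ _ (by simpa using hx), List.getElem_reverse]
    refine ⟨(L c).length, src c, fun x => (L c).reverse.getD x 0, ?_, ?_, ?_⟩
    · ext e
      simp only [Finset.mem_filter, Finset.mem_image, Finset.mem_range]
      constructor
      · rintro ⟨he, rfl⟩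
        have h1 := hcol e he
        obtain ⟨x, hx, hx'⟩ := List.mem_iff_getElem.1 (List.mem_reverse.2 h1.1)
        refine ⟨x, by simpa using hx, ?_⟩
        rw [List.getD_eq_getElem _ _ hx, hx', ← h1.2]
      · rintro ⟨x, hx, rfl⟩
        have h1 : (L c).reverse.getD x 0 ∈ L c := by
          rw [hget x hx]; exact List.getElem_mem _
        have h2 : (src c, (L c).reverse.getD x 0) ∈ E := (hE _).2 ⟨c, h1, rfl⟩
        exact ⟨h2, h.disj _ _ _ (hcol _ h2).1 h1⟩
    · intro x hx x' hx' hb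
      simp only [hget x hx, hget x' hx'] at hb
      have := (List.Nodup.getElem_inj_iff (h.nodup c)).1 hb
      omega
    · intro x hx
      simp only [hget x (by omega), hget (x + 1) hx]
      have := List.isChain_iff_getElem.1 (h.chain c) ((L c).length - 1 - (x + 1)) (by omega)
      have e : (L c).length - 1 - (x + 1) + 1 = (L c).length - 1 - x := by omega
      simpa only [e] using this
  · show E.card = _
    unfold ecount
    rw [Finset.card_biUnion]
    · refine Finset.sum_congr rfl fun c _ => ?_
      rw [Finset.card_image_of_injective _ (fun a b hab => (Prod.mk.inj hab).2),
        List.toFinset_card_of_nodup (h.nodup c)]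
    · intro c _ c' _ hcc
      rw [Function.onFun, Finset.disjoint_left]
      intro e h1 h2
      simp only [Finset.mem_image, List.mem_toFinset] at h1 h2
      obtain ⟨j, hj, rfl⟩ := h1
      obtain ⟨j', hj', h3⟩ := h2
      have : j' = j := (Prod.mk.inj h3).2
      exact hcc (h.disj _ _ _ hj (this ▸ hj'))

end Graph

section Matching

/-- `M` encodes a perfect matching between `IA \ IR` and `IR \ IA`, with distinct colors. -/
structure MInv (IA IR : Finset ℕ) (M : Multiset (ℕ × ℕ × ℕ)) : Prop where
  nd1 : (M.map (fun m => m.1)).Nodup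
  nd2 : (M.map (fun m => m.2.1)).Nodup
  ndc : (M.map (fun m => m.2.2)).Nodup
  mem1 : ∀ y, y ∈ M.map (fun m => m.1) ↔ y ∈ IA ∧ y ∉ IR
  mem2 : ∀ z, z ∈ M.map (fun m => m.2.1) ↔ z ∈ IR ∧ z ∉ IA

variable {IA IR : Finset ℕ} {M M0 : Multiset (ℕ × ℕ × ℕ)} {τ x j : ℕ}

lemma MInv.of1 (h : MInv IA IR M) {y : ℕ} (h1 : y ∈ IA) (h2 : y ∉ IR) :
    ∃ z c M0, M = (y, z, c) ::ₘ M0 := by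
  have := (h.mem1 y).2 ⟨h1, h2⟩
  rw [Multiset.mem_map] at this
  obtain ⟨⟨y', z, c⟩, hm, rfl⟩ := this
  obtain ⟨M0, h0⟩ := Multiset.exists_cons_of_mem hm
  exact ⟨z, c, M0, h0⟩

lemma MInv.of2 (h : MInv IA IR M) {z : ℕ} (h1 : z ∈ IR) (h2 : z ∉ IA) :
    ∃ y c M0, M = (y, z, c) ::ₘ M0 := by
  have := (h.mem2 z).2 ⟨h1, h2⟩
  rw [Multiset.mem_map] at this
  obtain ⟨⟨y, z', c⟩, hm, rfl⟩ := this
  obtain ⟨M0, h0⟩ := Multiset.exists_cons_of_mem hm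
  exact ⟨y, c, M0, h0⟩

lemma MInv.of12 (h : MInv IA IR M) {x j : ℕ} (h1 : x ∈ IA) (h2 : x ∉ IR)
    (h3 : j ∈ IR) (h4 : j ∉ IA) :
    (∃ c M0, M = (x, j, c) ::ₘ M0) ∨
    ∃ z c y c' M0, M = (x, z, c) ::ₘ (y, j, c') ::ₘ M0 := by
  obtain ⟨z, c, M0, h0⟩ := h.of1 h1 h2
  have := (h.mem2 j).2 ⟨h3, h4⟩
  rw [h0, Multiset.map_cons, Multiset.mem_cons] at this
  rcases this with e | e
  · simp only at e
    subst e
    exact Or.inl ⟨c, M0, h0⟩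
  · rw [Multiset.mem_map] at e
    obtain ⟨⟨y, z', c'⟩, hm, rfl⟩ := e
    obtain ⟨M1, h1⟩ := Multiset.exists_cons_of_mem hm
    exact Or.inr ⟨z, c, y, c', M1, by rw [h0, h1]⟩

lemma MInv.step1 (h : MInv IA IR M) (hA : τ ∉ IA) (hR : τ ∉ IR) (hxA : x ∈ IA)
    (hxR : x ∈ IR) :
    MInv (insert τ (IA.erase x)) (insert τ (IR.erase x)) M := by
  obtain ⟨h1, h2, h3, h4, h5⟩ := h
  refine ⟨h1, h2, h3, ?_, ?_⟩
  · intro y; rw [h4]; simp only [Finset.mem_insert, Finset.mem_erase]; grind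
  · intro y; rw [h5]; simp only [Finset.mem_insert, Finset.mem_erase]; grind

lemma MInv.step2 (h : MInv IA IR M) (hA : τ ∉ IA) (hR : τ ∉ IR) (hxA : x ∈ IA)
    (hjR : j ∈ IR) (hjA : j ∈ IA) (hxR : x ∈ IR) (hjx : j ≠ x) {c : ℕ}
    (hc : c ∉ M.map (fun m => m.2.2)) :
    MInv (insert τ (IA.erase x)) (insert τ (IR.erase j)) ((j, x, c) ::ₘ M) := by
  obtain ⟨h1, h2, h3, h4, h5⟩ := h
  constructor <;> simp only [Multiset.map_cons, Multiset.nodup_cons, Multiset.mem_cons,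
    Finset.mem_insert, Finset.mem_erase] <;> grind

lemma MInv.step3 {i c₀ : ℕ} (h : MInv IA IR ((x, i, c₀) ::ₘ M0)) (hA : τ ∉ IA) (hR : τ ∉ IR)
    (hxA : x ∈ IA) (hjR : j ∈ IR) (hjA : j ∈ IA) (hxR : x ∉ IR) {c : ℕ}
    (hc : c ∉ M0.map (fun m => m.2.2)) :
    MInv (insert τ (IA.erase x)) (insert τ (IR.erase j)) ((j, i, c) ::ₘ M0) := by
  obtain ⟨h1, h2, h3, h4, h5⟩ := h
  simp only [Multiset.map_cons, Multiset.nodup_cons, Multiset.mem_cons] at h1 h2 h3 h4 h5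
  constructor <;> simp only [Multiset.map_cons, Multiset.nodup_cons, Multiset.mem_cons,
    Finset.mem_insert, Finset.mem_erase] <;> grind

lemma MInv.step4 {y c₀ : ℕ} (h : MInv IA IR ((y, j, c₀) ::ₘ M0)) (hA : τ ∉ IA) (hR : τ ∉ IR)
    (hxA : x ∈ IA) (hjR : j ∈ IR) (hjA : j ∉ IA) (hxR : x ∈ IR) {c : ℕ}
    (hc : c ∉ M0.map (fun m => m.2.2)) :
    MInv (insert τ (IA.erase x)) (insert τ (IR.erase j)) ((y, x, c) ::ₘ M0) := by
  obtain ⟨h1, h2, h3, h4, h5⟩ := h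
  simp only [Multiset.map_cons, Multiset.nodup_cons, Multiset.mem_cons] at h1 h2 h3 h4 h5
  constructor <;> simp only [Multiset.map_cons, Multiset.nodup_cons, Multiset.mem_cons,
    Finset.mem_insert, Finset.mem_erase] <;> grind

lemma MInv.step5 {c₀ : ℕ} (h : MInv IA IR ((x, j, c₀) ::ₘ M0)) (hA : τ ∉ IA) (hR : τ ∉ IR)
    (hjA : j ∉ IA) (hxR : x ∉ IR) :
    MInv (insert τ (IA.erase x)) (insert τ (IR.erase j)) M0 := by
  obtain ⟨h1, h2, h3, h4, h5⟩ := h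
  simp only [Multiset.map_cons, Multiset.nodup_cons, Multiset.mem_cons] at h1 h2 h3 h4 h5
  constructor <;> (try simp only [Finset.mem_insert, Finset.mem_erase]) <;> grind

lemma MInv.step6 {y i c₀ c₁ : ℕ} (h : MInv IA IR ((x, i, c₀) ::ₘ (y, j, c₁) ::ₘ M0))
    (hA : τ ∉ IA) (hR : τ ∉ IR)
    (hjA : j ∉ IA) (hxR : x ∉ IR) {c : ℕ}
    (hc : c ∉ M0.map (fun m => m.2.2)) :
    MInv (insert τ (IA.erase x)) (insert τ (IR.erase j)) ((y, i, c) ::ₘ M0) := by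
  obtain ⟨h1, h2, h3, h4, h5⟩ := h
  simp only [Multiset.map_cons, Multiset.nodup_cons, Multiset.mem_cons] at h1 h2 h3 h4 h5
  constructor <;> simp only [Multiset.map_cons, Multiset.nodup_cons, Multiset.mem_cons,
    Finset.mem_insert, Finset.mem_erase] <;> grind

end Matching

section Main

variable {k T : ℕ} {σ : ℕ → S}

/-- Weight of a matched pair: two if good (the source is requested later), one otherwise. -/
noncomputable def wt (σ : ℕ → S) (T : ℕ) (m : ℕ × ℕ × ℕ) : ℕ :=
  if nextReq σ T m.1 < nextReq σ T m.2.1 then 2 else 1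

lemma wt_le (σ : ℕ → S) (T : ℕ) (m : ℕ × ℕ × ℕ) : wt σ T m ≤ 2 := by
  unfold wt; split_ifs <;> omega

lemma wt_ge (σ : ℕ → S) (T : ℕ) (m : ℕ × ℕ × ℕ) : 1 ≤ wt σ T m := by
  unfold wt; split_ifs <;> omega

/-- The current pairs are tips of their colors. -/
def CInv (σ : ℕ → S) (T n : ℕ) (src : ℕ → ℕ) (L : ℕ → List ℕ) (m : ℕ × ℕ × ℕ) : Prop :=
  m.2.2 < n ∧ src m.2.2 = m.2.1 ∧
    (nextReq σ T m.1 < nextReq σ T m.2.1 → L m.2.2 = [] ∨ (L m.2.2).head? = some m.1)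

lemma CInv.up {n : ℕ} {src : ℕ → ℕ} {L : ℕ → List ℕ} {m : ℕ × ℕ × ℕ}
    (h : CInv σ T n src L m) (a : ℕ) : CInv σ T (n + 1) (Function.update src n a) L m := by
  obtain ⟨h1, h2, h3⟩ := h
  refine ⟨by omega, ?_, h3⟩
  rw [Function.update_of_ne (by omega), h2]

lemma CInv.upL {n c : ℕ} {src : ℕ → ℕ} {L : ℕ → List ℕ} {m : ℕ × ℕ × ℕ}
    (h : CInv σ T n src L m) (hc : m.2.2 ≠ c) (l : List ℕ) :
    CInv σ T n src (Function.update L c l) m := by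
  obtain ⟨h1, h2, h3⟩ := h
  refine ⟨h1, h2, ?_⟩
  rw [Function.update_of_ne hc]
  exact h3

structure Inv_s10 (R A : CacheRun S k T σ) (t : ℕ) (M : Multiset (ℕ × ℕ × ℕ)) (n : ℕ)
    (src : ℕ → ℕ) (L : ℕ → List ℕ) : Prop where
  mi : MInv (lastIdx A t) (lastIdx R t) M
  ci : ∀ m ∈ M, CInv σ T n src L m
  gi : GInv R t n src L
  cost : missTo R t + (M.map (wt σ T)).sum ≤ 2 * missTo A t + ecount n L
  num : n + M.card ≤ 2 * missTo A t

lemma notMem_colors {n : ℕ} {src : ℕ → ℕ} {L : ℕ → List ℕ} {M : Multiset (ℕ × ℕ × ℕ)}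
    (h : ∀ m ∈ M, CInv σ T n src L m) : n ∉ M.map (fun m => m.2.2) := by
  rw [Multiset.mem_map]
  rintro ⟨m, hm, e⟩
  have := (h m hm).1
  omega

/-- A new pair with a fresh empty color. -/
lemma CInv.new {R : CacheRun S k T σ} {t n : ℕ} {src : ℕ → ℕ} {L : ℕ → List ℕ}
    (h : GInv R t n src L) (y z : ℕ) :
    CInv σ T (n + 1) (Function.update src n z) L (y, z, n) :=
  ⟨by simp, by simp, fun _ => Or.inl h.nil⟩

lemma inv_step (R A : CacheRun S k T σ) (hB : IsBelady A) {t : ℕ} (ht : t < T)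
    {M : Multiset (ℕ × ℕ × ℕ)} {n : ℕ} {src : ℕ → ℕ} {L : ℕ → List ℕ}
    (h : Inv_s10 R A t M n src L) :
    ∃ M' n' src' L', Inv_s10 R A (t + 1) M' n' src' L' := by
  obtain ⟨mi, ci, gi, cost, num⟩ := h
  have gi' := gi.mono (Nat.le_succ t)
  have hτ : ∀ Q : CacheRun S k T σ, t + 1 ∉ lastIdx Q t := by
    intro Q hq
    have := ((mem_lastIdx Q t _).1 hq).2.1
    omega
  by_cases hfull : (σ (t + 1) ∈ R.C t ∨ (R.C t).card = k) ∧
      (σ (t + 1) ∈ A.C t ∨ (A.C t).card = k)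
  swap
  · -- both caches agree and are not full, and the request is a miss
    have heq : R.C t = A.C t := by
      rcases caches_full R A ht.le with h | h
      · exact h
      · exact absurd ⟨Or.inr h.1, Or.inr h.2⟩ hfull
    rw [← heq, and_self] at hfull
    push Not at hfull
    have hlt : (R.C t).card < k := lt_of_le_of_ne (R.card_le t) hfull.2
    have hI := lastIdx_congr R A heq
    have hM : M = 0 := by
      rw [Multiset.eq_zero_iff_forall_notMem]
      intro m hm
      have := (mi.mem1 m.1).1 (Multiset.mem_map_of_mem _ hm)
      rw [hI] at this
      exact this.2 this.1
    subst hM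
    have hI' : lastIdx R (t + 1) = lastIdx A (t + 1) := by
      apply lastIdx_congr
      rw [R.hit (t + 1) (by omega) (by omega) (by simpa using Or.inr hlt),
        A.hit (t + 1) (by omega) (by omega) (by simpa [← heq] using Or.inr hlt)]
      simp [heq]
    have m1 := missTo_succ_miss R hfull.1
    have m2 := missTo_succ_miss A (heq ▸ hfull.1)
    refine ⟨0, n, src, L, ⟨by simp, by simp, by simp, ?_, ?_⟩, ci, gi', ?_, ?_⟩
    · intro y; rw [hI']; simp
    · intro y; rw [hI']; simp
    · simp at cost ⊢; omega
    · simp at num ⊢; omega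
  obtain ⟨j, hjR, hR', hRhit, hRmiss⟩ := full_step R ht hfull.1
  obtain ⟨x, hxA, hA', hAhit, hAmiss⟩ := full_step A ht hfull.2
  have nuR : ∀ e ∈ lastIdx R t, t < nextReq σ T e ∧
      (nextReq σ T e = t + 1 ↔ σ (t + 1) = σ e) := by
    intro e he
    rw [mem_lastIdx] at he
    exact ⟨nextReq_gt σ ht.le he.2.2.2, nextReq_eq σ ht he.2.1 he.2.2.2⟩
  have nuA : ∀ e ∈ lastIdx A t, t < nextReq σ T e ∧
      (nextReq σ T e = t + 1 ↔ σ (t + 1) = σ e) := by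
    intro e he
    rw [mem_lastIdx] at he
    exact ⟨nextReq_gt σ ht.le he.2.2.2, nextReq_eq σ ht he.2.1 he.2.2.2⟩
  have memR : ∀ e ∈ lastIdx R t, σ e ∈ R.C t := fun e he => ((mem_lastIdx R t e).1 he).2.2.1
  have memA : ∀ e ∈ lastIdx A t, σ e ∈ A.C t := fun e he => ((mem_lastIdx A t e).1 he).2.2.1
  -- if `A` hits and `x` is in `R`, then `R` evicts `x` as well
  have hAx : σ (t + 1) ∈ A.C t → x ∈ lastIdx R t → j = x := by
    intro h1 h2
    have h3 := (nuA x hxA).2.1 (hAhit h1)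
    have h4 : σ (t + 1) ∈ R.C t := h3 ▸ memR x h2
    have h5 := (nuR j hjR).2.1 (hRhit h4)
    exact lastIdx_unique R A hjR hxA (h5.symm.trans h3)
  have hRj : σ (t + 1) ∈ R.C t → j ∈ lastIdx A t → j = x := by
    intro h1 h2
    have h3 := (nuR j hjR).2.1 (hRhit h1)
    have h4 : σ (t + 1) ∈ A.C t := h3 ▸ memA j h2
    have h5 := (nuA x hxA).2.1 (hAhit h4)
    exact lastIdx_unique R A hjR hxA (h3.symm.trans h5)
  have hmR : missTo R (t + 1) ≤ missTo R t + 1 := by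
    by_cases h : σ (t + 1) ∈ R.C t
    · rw [missTo_succ_hit R h]; omega
    · rw [missTo_succ_miss R h]
  have hmA : missTo A t ≤ missTo A (t + 1) := by
    by_cases h : σ (t + 1) ∈ A.C t
    · rw [missTo_succ_hit A h]
    · rw [missTo_succ_miss A h]; omega
  have hbel : σ (t + 1) ∉ A.C t → ∀ i ∈ lastIdx A t, nextReq σ T i ≤ nextReq σ T x := by
    intro h i hi
    have := hAmiss h
    exact hB (t + 1) this.1 x this.2.1 this.2.2 i (by simpa using hi)
  -- when `A` hits, a pair `(x, i)` is good
  have hgood : σ (t + 1) ∈ A.C t → ∀ i ∈ lastIdx R t, x ∉ lastIdx R t →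
      nextReq σ T x < nextReq σ T i := by
    intro h1 i hi hx
    have h3 := hAhit h1
    have h4 := (nuR i hi).1
    have h5 : nextReq σ T i ≠ t + 1 := by
      intro h5
      have h6 := (nuR i hi).2.1 h5
      have h7 := (nuA x hxA).2.1 h3
      exact hx ((lastIdx_unique R A hi hxA (h6.symm.trans h7)) ▸ hi)
    omega
  by_cases hjA : j ∈ lastIdx A t
  · by_cases hxR : x ∈ lastIdx R t
    · by_cases hjx : j = x
      · -- nothing changes
        subst hjx
        refine ⟨M, n, src, L, ?_, ci, gi', ?_, by omega⟩
        · rw [hA', hR']; exact mi.step1 (hτ A) (hτ R) hjA hjR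
        · by_cases h : σ (t + 1) ∈ A.C t
          · have h3 := (nuA j hxA).2.1 (hAhit h)
            rw [missTo_succ_hit R (h3 ▸ memR j hxR)]
            omega
          · rw [missTo_succ_miss A h]; omega
      · have hAm : σ (t + 1) ∉ A.C t := fun h => hjx (hAx h hxR)
        have hRm : σ (t + 1) ∉ R.C t := fun h => hjx (hRj h hjA)
        have hev := hRmiss hRm
        rw [missTo_succ_miss R hRm] at hmR
        have mi' := mi.step2 (hτ A) (hτ R) hxA hjR hjA hxR hjx (notMem_colors ci)
        rw [← hA', ← hR'] at mi'
        by_cases hlt : nextReq σ T j < nextReq σ T x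
        · -- a new color with an edge
          have g2 := (gi.newColor x).extend (c := n) (by omega) hev (by simpa using hxR)
            (by simpa using hlt) (Or.inl gi.nil)
          refine ⟨(j, x, n) ::ₘ M, n + 1, Function.update src n x, _, mi', ?_, g2, ?_, ?_⟩
          · intro m hm
            rw [Multiset.mem_cons] at hm
            rcases hm with rfl | hm
            · exact ⟨by simp, by simp, fun _ => Or.inr (by simp)⟩
            · exact ((ci m hm).up x).upL (by have := (ci m hm).1; omega) _
          · rw [ecount_extend (by omega), ecount_newColor gi, missTo_succ_miss R hRm,
              missTo_succ_miss A hAm, Multiset.map_cons, Multiset.sum_cons]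
            have := wt_le σ T (j, x, n)
            omega
          · rw [missTo_succ_miss A hAm, Multiset.card_cons]; omega
        · refine ⟨(j, x, n) ::ₘ M, n + 1, Function.update src n x, L, mi', ?_,
            gi'.newColor x, ?_, ?_⟩
          · intro m hm
            rw [Multiset.mem_cons] at hm
            rcases hm with rfl | hm
            · exact CInv.new gi j x
            · exact (ci m hm).up x
          · rw [ecount_newColor gi, missTo_succ_miss R hRm,
              missTo_succ_miss A hAm, Multiset.map_cons, Multiset.sum_cons]
            have : wt σ T (j, x, n) = 1 := if_neg hlt
            omega
          · rw [missTo_succ_miss A hAm, Multiset.card_cons]; omega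
    · -- `j` in both caches, `x` only in `A`
      obtain ⟨i, c, M0, rfl⟩ := mi.of1 hxA hxR
      have hRm : σ (t + 1) ∉ R.C t := by
        intro h
        exact hxR (hRj h hjA ▸ hjR)
      have hev := hRmiss hRm
      have hi : i ∈ lastIdx R t := ((mi.mem2 i).1 (by simp)).1
      have ci0 : ∀ m ∈ M0, CInv σ T n src L m := fun m hm => ci m (Multiset.mem_cons_of_mem hm)
      obtain ⟨cn, cs, cL⟩ := ci (x, i, c) (Multiset.mem_cons_self _ _)
      simp only at cn cs cL
      rw [Multiset.map_cons, Multiset.sum_cons] at cost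
      rw [Multiset.card_cons] at num
      by_cases hAh : σ (t + 1) ∈ A.C t
      · have hg := hgood hAh i hi hxR
        have hw : wt σ T (x, i, c) = 2 := if_pos hg
        have hcc : c ∉ M0.map (fun m => m.2.2) := by
          have := mi.ndc
          rw [Multiset.map_cons, Multiset.nodup_cons] at this
          exact this.1
        have mi' := mi.step3 (hτ A) (hτ R) hxA hjR hjA hxR hcc
        rw [← hA', ← hR'] at mi'
        by_cases hlt : nextReq σ T j < nextReq σ T i
        · have g2 := gi.extend (c := c) cn hev (cs ▸ hi) (cs ▸ hlt)
            ((cL hg).imp id fun h => ⟨x, h, hAhit hAh⟩)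
          refine ⟨(j, i, c) ::ₘ M0, n, src, _, mi', ?_, g2, ?_, ?_⟩
          · intro m hm
            rw [Multiset.mem_cons] at hm
            rcases hm with rfl | hm
            · exact ⟨cn, cs, fun _ => Or.inr (by simp)⟩
            · refine (ci0 m hm).upL ?_ _
              intro e
              exact hcc (e ▸ Multiset.mem_map_of_mem (fun m => m.2.2) hm)
          · rw [ecount_extend cn, missTo_succ_miss R hRm,
              missTo_succ_hit A hAh, Multiset.map_cons, Multiset.sum_cons]
            have := wt_le σ T (j, i, c)
            omega
          · rw [missTo_succ_hit A hAh, Multiset.card_cons]; omega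
        · refine ⟨(j, i, c) ::ₘ M0, n, src, L, mi', ?_, gi', ?_, ?_⟩
          · intro m hm
            rw [Multiset.mem_cons] at hm
            rcases hm with rfl | hm
            · exact ⟨cn, cs, fun h => absurd h hlt⟩
            · exact ci0 m hm
          · rw [missTo_succ_miss R hRm,
              missTo_succ_hit A hAh, Multiset.map_cons, Multiset.sum_cons]
            have : wt σ T (j, i, c) = 1 := if_neg hlt
            omega
          · rw [missTo_succ_hit A hAh, Multiset.card_cons]; omega
      · have mi' := mi.step3 (hτ A) (hτ R) hxA hjR hjA hxR (notMem_colors ci0)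
        rw [← hA', ← hR'] at mi'
        refine ⟨(j, i, n) ::ₘ M0, n + 1, Function.update src n i, L, mi', ?_,
          gi'.newColor i, ?_, ?_⟩
        · intro m hm
          rw [Multiset.mem_cons] at hm
          rcases hm with rfl | hm
          · exact CInv.new gi j i
          · exact (ci0 m hm).up i
        · rw [ecount_newColor gi, missTo_succ_miss A hAh, Multiset.map_cons, Multiset.sum_cons]
          have := wt_le σ T (j, i, n)
          have := wt_ge σ T (x, i, c)
          omega
        · rw [missTo_succ_miss A hAh, Multiset.card_cons]; omega
  · by_cases hxR : x ∈ lastIdx R t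
    · -- `x` in both caches, `j` only in `R`
      obtain ⟨y, c, M0, rfl⟩ := mi.of2 hjR hjA
      have hAm : σ (t + 1) ∉ A.C t := by
        intro h
        exact hjA (hAx h hxR ▸ hxA)
      have ci0 : ∀ m ∈ M0, CInv σ T n src L m := fun m hm => ci m (Multiset.mem_cons_of_mem hm)
      rw [Multiset.map_cons, Multiset.sum_cons] at cost
      rw [Multiset.card_cons] at num
      have mi' := mi.step4 (hτ A) (hτ R) hxA hjR hjA hxR (notMem_colors ci0)
      rw [← hA', ← hR'] at mi'
      refine ⟨(y, x, n) ::ₘ M0, n + 1, Function.update src n x, L, mi', ?_,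
        gi'.newColor x, ?_, ?_⟩
      · intro m hm
        rw [Multiset.mem_cons] at hm
        rcases hm with rfl | hm
        · exact CInv.new gi y x
        · exact (ci0 m hm).up x
      · rw [ecount_newColor gi, missTo_succ_miss A hAm, Multiset.map_cons, Multiset.sum_cons]
        have := wt_le σ T (y, x, n)
        have := wt_ge σ T (y, j, c)
        omega
      · rw [missTo_succ_miss A hAm, Multiset.card_cons]; omega
    · rcases mi.of12 hxA hxR hjR hjA with ⟨c, M0, rfl⟩ | ⟨i, c, y, c', M0, rfl⟩
      · have mi' := mi.step5 (hτ A) (hτ R) hjA hxR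
        rw [← hA', ← hR'] at mi'
        rw [Multiset.map_cons, Multiset.sum_cons] at cost
        rw [Multiset.card_cons] at num
        have := wt_ge σ T (x, j, c)
        exact ⟨M0, n, src, L, mi', fun m hm => ci m (Multiset.mem_cons_of_mem hm), gi',
          by omega, by omega⟩
      · have hi : i ∈ lastIdx R t := ((mi.mem2 i).1 (by simp)).1
        have ci0 : ∀ m ∈ M0, CInv σ T n src L m := fun m hm =>
          ci m (Multiset.mem_cons_of_mem (Multiset.mem_cons_of_mem hm))
        have mi' := mi.step6 (hτ A) (hτ R) hjA hxR (notMem_colors ci0)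
        rw [← hA', ← hR'] at mi'
        simp only [Multiset.map_cons, Multiset.sum_cons] at cost
        simp only [Multiset.card_cons] at num
        refine ⟨(y, i, n) ::ₘ M0, n + 1, Function.update src n i, L, mi', ?_,
          gi'.newColor i, ?_, ?_⟩
        · intro m hm
          rw [Multiset.mem_cons] at hm
          rcases hm with rfl | hm
          · exact CInv.new gi y i
          · exact (ci0 m hm).up i
        · rw [ecount_newColor gi, Multiset.map_cons, Multiset.sum_cons]
          have h1 := wt_le σ T (y, i, n)
          have h2 := wt_ge σ T (x, i, c)
          have h3 := wt_ge σ T (y, j, c')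
          by_cases hAh : σ (t + 1) ∈ A.C t
          · have hw : wt σ T (x, i, c) = 2 := if_pos (hgood hAh i hi hxR)
            omega
          · rw [missTo_succ_miss A hAh]; omega
        · rw [Multiset.card_cons]; omega

lemma inv_all (R A : CacheRun S k T σ) (hB : IsBelady A) (t : ℕ) (ht : t ≤ T) :
    ∃ M n src L, Inv_s10 R A t M n src L := by
  induction t with
  | zero =>
    refine ⟨0, 0, fun _ => 0, fun _ => [], ⟨by simp, by simp, by simp, ?_, ?_⟩, by simp,
      ⟨by simp, by simp, by simp, by simp⟩, ?_, by simp⟩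
    · intro y; simp [lastIdx]
    · intro y; simp [lastIdx]
    · simp [missTo]
  | succ t ih =>
    obtain ⟨M, n, src, L, h⟩ := ih (by omega)
    exact inv_step R A hB (by omega) h

end Main

/-- For any run of a feasible eviction strategy there is an eviction
graph with an edge coloring such that same-colored edges share their source, the targets
of the edges of each color (in order) form a chain, at most `3·OPT` colors are used, and
`OBJ_Q ≤ 2·OPT + |E|`. -/
theorem stmt10 {S : Type} [DecidableEq S] (k T : ℕ) (hk : 1 ≤ k) (σ : ℕ → S)
    (R A : CacheRun S k T σ) (hA : IsBelady A) :
    ∃ (H : EvictionGraph R) (col : ℕ × ℕ → ℕ) (n : ℕ),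
      (∀ e ∈ H.E, col e < n) ∧
      (∀ e ∈ H.E, ∀ e' ∈ H.E, col e = col e' → e.1 = e'.1) ∧
      (∀ c : ℕ, ∃ (d : ℕ) (a : ℕ) (b : ℕ → ℕ),
        (H.E.filter fun e => col e = c) = (Finset.range d).image (fun x => (a, b x)) ∧
        (∀ x < d, ∀ x' < d, b x = b x' → x = x') ∧
        (∀ x, x + 1 < d → TriggersIdx R (b x) (b (x + 1)))) ∧
      n ≤ 3 * misses A ∧
      misses R ≤ 2 * misses A + H.E.card := by
  obtain ⟨M, n, src, L, h⟩ := inv_all R A hA T le_rfl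
  obtain ⟨H, col, h1, h2, h3, h4⟩ := h.gi.finish
  have hR : missTo R T = misses R := rfl
  have hA' : missTo A T = misses A := rfl
  have hc := h.cost
  have hn := h.num
  refine ⟨H, col, n, h1, h2, h3, ?_, ?_⟩ <;> omega

end Caching
end
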